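/- arXiv:2112.14767 — 2 statements merged into one kernel-verified Lean document; each statement's English description precedes it below -/
import Mathlib

section
/- Let q > 2 and let φ : S² → S² be a homeomorphism of the unit sphere in ℝ³. Let D̃_k be a dyadic decomposition of S² into closed bi-Lipschitz squares of diameter comparable to 2^{-k}. Then the double integral ∫_{S²}∫_{S²} |φ(x) − φ(y)|^q / |x − y|^{q+1} dx dy is finite if and only if ∑_{k=1}^∞ 2^{k(q−3)} ∑_{Q̃ ∈ D̃_k} (diam φ(Q̃))^q < ∞. -/
open MeasureTheory
open scoped NNReal ENNReal

noncomputable section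

/-- The closed dyadic square of generation `k` with lower-left lattice corner `(i/2^k, j/2^k)`
inside `[0,1]²`. -/
def dyadicSq (k : ℕ) (i j : ℕ) : Set (ℝ × ℝ) :=
  Set.Icc ((i : ℝ) / 2 ^ k) (((i : ℝ) + 1) / 2 ^ k) ×ˢ
    Set.Icc ((j : ℝ) / 2 ^ k) (((j : ℝ) + 1) / 2 ^ k)

/-- The six faces of the unit cube `[0,1]³ ⊂ ℝ³`, parametrized over `[0,1]²`. -/
def cubeFace : Fin 6 → ℝ × ℝ → EuclideanSpace ℝ (Fin 3) :=
  ![fun p => (WithLp.equiv 2 (Fin 3 → ℝ)).symm ![0, p.1, p.2],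
    fun p => (WithLp.equiv 2 (Fin 3 → ℝ)).symm ![1, p.1, p.2],
    fun p => (WithLp.equiv 2 (Fin 3 → ℝ)).symm ![p.1, 0, p.2],
    fun p => (WithLp.equiv 2 (Fin 3 → ℝ)).symm ![p.1, 1, p.2],
    fun p => (WithLp.equiv 2 (Fin 3 → ℝ)).symm ![p.1, p.2, 0],
    fun p => (WithLp.equiv 2 (Fin 3 → ℝ)).symm ![p.1, p.2, 1]]

/-- The boundary of the unit cube `[0,1]³`. -/
def cubeBoundary : Set (EuclideanSpace ℝ (Fin 3)) :=
  ⋃ f : Fin 6, cubeFace f '' (Set.Icc (0 : ℝ) 1 ×ˢ Set.Icc (0 : ℝ) 1)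

/-- ambient space -/
abbrev E3 := EuclideanSpace ℝ (Fin 3)

/-- unit square -/
abbrev Isq : Set (ℝ × ℝ) := Set.Icc (0 : ℝ) 1 ×ˢ Set.Icc (0 : ℝ) 1

/-- axis orthogonal to a face -/
def fAx : Fin 6 → Fin 3 := ![0, 0, 1, 1, 2, 2]

/-- value of the constant coordinate -/
def fVal : Fin 6 → ℝ := ![0, 1, 0, 1, 0, 1]

lemma e3_coord_le (x y : E3) (i : Fin 3) : |x i - y i| ≤ dist x y := by
  have := PiLp.norm_apply_le (x - y) i
  simpa [dist_eq_norm] using this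

lemma e3_dist_le (x y : E3) (h : ℝ) (hh : ∀ i, |x i - y i| ≤ h) : dist x y ≤ 2 * h := by
  have h0 : 0 ≤ h := (abs_nonneg _).trans (hh 0)
  rw [EuclideanSpace.dist_eq, Fin.sum_univ_three]
  apply Real.sqrt_le_iff.2
  refine ⟨by positivity, ?_⟩
  have := fun i => sq_le_sq' (by linarith [abs_nonneg (x i - y i), hh i]) (hh i)
  simp only [Real.dist_eq]
  nlinarith [this 0, this 1, this 2]

lemma cubeFace_le (f : Fin 6) (p p' : ℝ × ℝ) :
    dist p p' ≤ dist (cubeFace f p) (cubeFace f p') := by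
  rw [Prod.dist_eq, Real.dist_eq, Real.dist_eq]
  have h := e3_coord_le (cubeFace f p) (cubeFace f p')
  have h0 := h 0
  have h1 := h 1
  have h2 := h 2
  fin_cases f <;> simp [cubeFace] at h0 h1 h2 ⊢ <;> constructor <;> assumption

lemma cubeFace_ge (f : Fin 6) (p p' : ℝ × ℝ) :
    dist (cubeFace f p) (cubeFace f p') ≤ 2 * dist p p' := by
  apply e3_dist_le
  rw [Prod.dist_eq, Real.dist_eq, Real.dist_eq]
  intro i
  fin_cases f <;> fin_cases i <;> simp [cubeFace]

lemma cubeFace_mem (f : Fin 6) (p : ℝ × ℝ) (hp : p ∈ Isq) :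
    (∀ i, cubeFace f p i ∈ Set.Icc (0:ℝ) 1) ∧ cubeFace f p (fAx f) = fVal f := by
  obtain ⟨⟨h1, h2⟩, h3, h4⟩ := hp
  constructor
  · intro i
    fin_cases f <;> fin_cases i <;> simp [cubeFace, *]
  · fin_cases f <;> simp [cubeFace, fAx, fVal]

lemma exists_cubeFace (f : Fin 6) (z : E3) (hz : ∀ i, z i ∈ Set.Icc (0:ℝ) 1)
    (hf : z (fAx f) = fVal f) : ∃ p ∈ Isq, cubeFace f p = z := by
  have hz0 := hz 0
  have hz1 := hz 1
  have hz2 := hz 2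
  fin_cases f <;> simp [fAx, fVal] at hf
  · exact ⟨(z 1, z 2), ⟨hz1, hz2⟩, by ext i; fin_cases i <;> simp [cubeFace, hf]⟩
  · exact ⟨(z 1, z 2), ⟨hz1, hz2⟩, by ext i; fin_cases i <;> simp [cubeFace, hf]⟩
  · exact ⟨(z 0, z 2), ⟨hz0, hz2⟩, by ext i; fin_cases i <;> simp [cubeFace, hf]⟩
  · exact ⟨(z 0, z 2), ⟨hz0, hz2⟩, by ext i; fin_cases i <;> simp [cubeFace, hf]⟩
  · exact ⟨(z 0, z 1), ⟨hz0, hz1⟩, by ext i; fin_cases i <;> simp [cubeFace, hf]⟩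
  · exact ⟨(z 0, z 1), ⟨hz0, hz1⟩, by ext i; fin_cases i <;> simp [cubeFace, hf]⟩

lemma fVal_cases (f g : Fin 6) : fVal f = fVal g ∨ |fVal f - fVal g| = 1 := by
  fin_cases f <;> fin_cases g <;> simp [fVal]

/-- Two nearby points of the cube boundary are linked through a common point of their faces. -/
lemma cube_link (f g : Fin 6) (p p' : ℝ × ℝ) (hp : p ∈ Isq) (hp' : p' ∈ Isq)
    (h : dist (cubeFace f p) (cubeFace g p') < 1) :
    ∃ s ∈ Isq, ∃ s' ∈ Isq, cubeFace f s = cubeFace g s' ∧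
      dist p s ≤ 2 * dist (cubeFace f p) (cubeFace g p') ∧
      dist s' p' ≤ 2 * dist (cubeFace f p) (cubeFace g p') := by
  obtain ⟨hu, hu'⟩ := cubeFace_mem f p hp
  obtain ⟨hv, hv'⟩ := cubeFace_mem g p' hp'
  have hc := e3_coord_le (cubeFace f p) (cubeFace g p')
  set u := cubeFace f p with hudef
  set v := cubeFace g p' with hvdef
  let w : E3 := (WithLp.equiv 2 (Fin 3 → ℝ)).symm
    (fun c => if c = fAx f then u c else if c = fAx g then v c else u c)
  have hw : ∀ c, w c = if c = fAx f then u c else if c = fAx g then v c else u c := fun c => rfl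
  have hwI : ∀ i, w i ∈ Set.Icc (0:ℝ) 1 := by
    intro i; rw [hw]; split_ifs
    exacts [hu i, hv i, hu i]
  have hwf : w (fAx f) = fVal f := by rw [hw]; simp [hu']
  have hwg : w (fAx g) = fVal g := by
    rw [hw]; split_ifs with h1
    · rcases fVal_cases f g with h2 | h2
      · rw [h1, hu', h2]
      · exfalso
        have := hc (fAx g)
        rw [hv', h1, hu', h2] at this
        linarith
    · exact hv'
    · exact absurd rfl ‹_›
  obtain ⟨s, hs, hsw⟩ := exists_cubeFace f w hwI hwf
  obtain ⟨s', hs', hsw'⟩ := exists_cubeFace g w hwI hwg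
  refine ⟨s, hs, s', hs', by rw [hsw, hsw'], ?_, ?_⟩
  · refine (cubeFace_le f p s).trans ?_
    rw [hsw, ← hudef]
    apply e3_dist_le
    intro i
    rw [hw]; split_ifs
    · simp
    · exact hc i
    · simp
  · refine (cubeFace_le g s' p').trans ?_
    rw [hsw', ← hvdef]
    apply e3_dist_le
    intro i
    rw [hw]; split_ifs
    · exact hc i
    · simp
    · exact hc i

/-- A bi-Lipschitz parametrization of the sphere by six squares. -/
structure Par (P : Fin 6 → ℝ × ℝ → E3) (M : ℝ) : Prop where
  hM : 1 ≤ M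
  lip : ∀ f, ∀ p ∈ Isq, ∀ p' ∈ Isq, dist (P f p) (P f p') ≤ M * dist p p'
  anti : ∀ f, ∀ p ∈ Isq, ∀ p' ∈ Isq, dist p p' ≤ M * dist (P f p) (P f p')
  onto : ⋃ f, P f '' Isq = Metric.sphere (0 : E3) 1
  link : ∀ f g, ∀ p ∈ Isq, ∀ p' ∈ Isq, M * dist (P f p) (P g p') < 1 →
    ∃ s ∈ Isq, ∃ s' ∈ Isq, P f s = P g s' ∧ dist p s ≤ M * dist (P f p) (P g p') ∧
      dist s' p' ≤ M * dist (P f p) (P g p')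

lemma par_of (Φ : E3 → E3) (K : ℝ≥0)
    (hΦlip : LipschitzOnWith K Φ cubeBoundary)
    (hΦanti : AntilipschitzWith K (cubeBoundary.restrict Φ))
    (hΦonto : Φ '' cubeBoundary = Metric.sphere (0 : E3) 1) :
    Par (fun f p => Φ (cubeFace f p)) (2 * (K + 1)) := by
  have hmem : ∀ f, ∀ p ∈ Isq, cubeFace f p ∈ cubeBoundary := fun f p hp =>
    Set.mem_iUnion.2 ⟨f, p, hp, rfl⟩
  have hl : ∀ x ∈ cubeBoundary, ∀ y ∈ cubeBoundary, dist (Φ x) (Φ y) ≤ K * dist x y :=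
    fun x hx y hy => hΦlip.dist_le_mul x hx y hy
  have ha : ∀ x ∈ cubeBoundary, ∀ y ∈ cubeBoundary, dist x y ≤ K * dist (Φ x) (Φ y) :=
    fun x hx y hy => hΦanti.le_mul_dist ⟨x, hx⟩ ⟨y, hy⟩
  have hK : (0:ℝ) ≤ K := K.2
  refine ⟨by linarith, ?_, ?_, ?_, ?_⟩
  · intro f p hp p' hp'
    have h1 := hl _ (hmem f p hp) _ (hmem f p' hp')
    have h2 := cubeFace_ge f p p'
    have h3 : 0 ≤ dist p p' := dist_nonneg
    nlinarith
  · intro f p hp p' hp'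
    have h1 := ha _ (hmem f p hp) _ (hmem f p' hp')
    have h2 := cubeFace_le f p p'
    have h3 : 0 ≤ dist (Φ (cubeFace f p)) (Φ (cubeFace f p')) := dist_nonneg
    nlinarith
  · rw [← hΦonto, cubeBoundary, Set.image_iUnion]
    simp_rw [Set.image_image]
  · intro f g p hp p' hp' h
    have h1 := ha _ (hmem f p hp) _ (hmem g p' hp')
    have h3 : 0 ≤ dist (Φ (cubeFace f p)) (Φ (cubeFace g p')) := dist_nonneg
    obtain ⟨s, hs, s', hs', e, d1, d2⟩ := cube_link f g p p' hp hp' (by nlinarith)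
    exact ⟨s, hs, s', hs', by simp only [e], d1.trans (by nlinarith), d2.trans (by nlinarith)⟩

/-- surface measure on the sphere -/
def sph : Measure E3 := (μH[2] : Measure E3).restrict (Metric.sphere (0 : E3) 1)

lemma sph_upper {P M} (hP : Par P M) : ∃ C : ℝ, 0 < C ∧ ∀ x : E3, ∀ r : ℝ, 0 < r →
    sph (Metric.closedBall x r) ≤ ENNReal.ofReal (C * r ^ 2) := by
  have hM := hP.hM
  refine ⟨6 * (M ^ 2 * (4 * M) ^ 2), by positivity, fun x r hr => ?_⟩
  rw [sph, Measure.restrict_apply measurableSet_closedBall]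
  let A : Fin 6 → Set (ℝ × ℝ) := fun f => {p ∈ Isq | P f p ∈ Metric.closedBall x r}
  have hA : ∀ f, volume (A f) ≤ ENNReal.ofReal ((4 * M) ^ 2 * r ^ 2) := by
    intro f
    rcases (A f).eq_empty_or_nonempty with h | ⟨p0, hp0⟩
    · simp [h]
    · have hsub : A f ⊆ Metric.closedBall p0 (2 * M * r) := by
        intro p hp
        have h1 := hP.anti f p hp.1 p0 hp0.1
        have h2 := dist_triangle_right (P f p) (P f p0) x
        have h3 := Metric.mem_closedBall.1 hp.2
        have h4 := Metric.mem_closedBall.1 hp0.2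
        rw [Metric.mem_closedBall]
        nlinarith
      refine (measure_mono hsub).trans ?_
      rw [← Prod.mk.eta (p := p0), ← closedBall_prod_same, Measure.volume_eq_prod, Measure.prod_prod, Real.volume_closedBall,
        Real.volume_closedBall, ← ENNReal.ofReal_mul (by positivity)]
      apply ENNReal.ofReal_le_ofReal
      nlinarith
  have hsub : Metric.closedBall x r ∩ Metric.sphere (0 : E3) 1 ⊆ ⋃ f, P f '' A f := by
    rintro y ⟨hy, hys⟩
    rw [← hP.onto] at hys
    obtain ⟨f, p, hp, rfl⟩ := Set.mem_iUnion.1 hys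
    exact Set.mem_iUnion.2 ⟨f, p, ⟨hp, hy⟩, rfl⟩
  have himg : ∀ f, (μH[2] : Measure E3) (P f '' A f) ≤
      ENNReal.ofReal (M ^ 2 * ((4 * M) ^ 2 * r ^ 2)) := by
    intro f
    have hl : LipschitzOnWith M.toNNReal (P f) (A f) := by
      apply LipschitzOnWith.of_dist_le_mul
      intro p hp p' hp'
      rw [Real.coe_toNNReal _ (by positivity)]
      exact hP.lip f p hp.1 p' hp'.1
    refine (hl.hausdorffMeasure_image_le (d := 2) (by norm_num)).trans ?_
    rw [hausdorffMeasure_prod_real, ENNReal.ofReal_mul (by positivity)]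
    refine mul_le_mul' (le_of_eq ?_) (hA f)
    rw [ENNReal.ofReal_pow (by positivity)]
    norm_num
    rfl
  refine (measure_mono hsub).trans ((measure_iUnion_fintype_le _ _).trans ?_)
  refine (Finset.sum_le_sum fun f _ => himg f).trans ?_
  rw [Finset.sum_const, Finset.card_univ, Fintype.card_fin, nsmul_eq_mul,
    ← ENNReal.ofReal_natCast, ← ENNReal.ofReal_mul (by positivity)]
  apply ENNReal.ofReal_le_ofReal
  push_cast
  apply le_of_eq; ring

lemma icc_len (a ρ : ℝ) (ha : a ∈ Set.Icc (0:ℝ) 1) (h0 : 0 < ρ) (h1 : ρ ≤ 1) :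
    ∃ b, Set.Icc b (b + ρ) ⊆ Set.Icc (0:ℝ) 1 ∧ Set.Icc b (b + ρ) ⊆ Metric.closedBall a ρ := by
  obtain ⟨h2, h3⟩ := ha
  by_cases h : a + ρ ≤ 1
  · refine ⟨a, Set.Icc_subset_Icc h2 h, ?_⟩
    rw [Real.closedBall_eq_Icc]; exact Set.Icc_subset_Icc (by linarith) le_rfl
  · refine ⟨1 - ρ, Set.Icc_subset_Icc (by linarith) (by linarith), ?_⟩
    rw [Real.closedBall_eq_Icc]; exact Set.Icc_subset_Icc (by linarith) (by linarith)

lemma sph_lower {P M} (hP : Par P M) : ∃ c : ℝ, 0 < c ∧ ∀ x ∈ Metric.sphere (0 : E3) 1,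
    ∀ r : ℝ, 0 < r → r ≤ 1 → ENNReal.ofReal (c * r ^ 2) ≤ sph (Metric.closedBall x r) := by
  have hM := hP.hM
  refine ⟨(M ^ 4)⁻¹, by positivity, fun x hx r hr hr1 => ?_⟩
  rw [sph, Measure.restrict_apply measurableSet_closedBall]
  rw [← hP.onto] at hx
  obtain ⟨f, p, hp, rfl⟩ := Set.mem_iUnion.1 hx
  have hρ : 0 < r / M := by positivity
  have hρ1 : r / M ≤ 1 := by rw [div_le_one (by positivity)]; linarith
  obtain ⟨b1, hb1, hb1'⟩ := icc_len p.1 (r / M) hp.1 hρ hρ1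
  obtain ⟨b2, hb2, hb2'⟩ := icc_len p.2 (r / M) hp.2 hρ hρ1
  set B : Set (ℝ × ℝ) := Set.Icc b1 (b1 + r / M) ×ˢ Set.Icc b2 (b2 + r / M) with hB
  have hBI : B ⊆ Isq := Set.prod_mono hb1 hb2
  have hBb : B ⊆ Metric.closedBall p (r / M) := by
    rw [← Prod.mk.eta (p := p), ← closedBall_prod_same]
    exact Set.prod_mono hb1' hb2'
  have hvol : volume B = ENNReal.ofReal ((r / M) ^ 2) := by
    rw [hB, Measure.volume_eq_prod, Measure.prod_prod, Real.volume_Icc, Real.volume_Icc,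
      ← ENNReal.ofReal_mul (by linarith)]
    congr 1; ring
  have hsub : P f '' B ⊆ Metric.closedBall (P f p) r ∩ Metric.sphere (0 : E3) 1 := by
    rintro _ ⟨s, hs, rfl⟩
    constructor
    · have h1 := hP.lip f s (hBI hs) p hp
      have h2 := Metric.mem_closedBall.1 (hBb hs)
      rw [Metric.mem_closedBall]
      refine h1.trans ?_
      rw [le_div_iff₀ (by positivity)] at h2
      linarith
    · rw [← hP.onto]
      exact Set.mem_iUnion.2 ⟨f, s, hBI hs, rfl⟩
  refine le_trans ?_ (measure_mono hsub)
  have hinj : Set.InjOn (P f) B := by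
    intro s hs s' hs' h
    have := hP.anti f s (hBI hs) s' (hBI hs')
    rw [h, dist_self, mul_zero] at this
    exact dist_le_zero.1 this
  have hl : LipschitzOnWith M.toNNReal (Function.invFunOn (P f) B) (P f '' B) := by
    apply LipschitzOnWith.of_dist_le_mul
    rintro _ ⟨s, hs, rfl⟩ _ ⟨s', hs', rfl⟩
    rw [Real.coe_toNNReal _ (by positivity), hinj.leftInvOn_invFunOn hs,
      hinj.leftInvOn_invFunOn hs']
    exact hP.anti f s (hBI hs) s' (hBI hs')
  have h := hl.hausdorffMeasure_image_le (d := 2) (by norm_num)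
  rw [hinj.invFunOn_image subset_rfl, hausdorffMeasure_prod_real, hvol] at h
  have h2 : (M.toNNReal : ℝ≥0∞) ^ (2:ℝ) = ENNReal.ofReal (M ^ 2) := by
    rw [ENNReal.ofReal_pow (by positivity)]
    norm_num
    rfl
  rw [h2] at h
  calc ENNReal.ofReal ((M ^ 4)⁻¹ * r ^ 2)
      = ENNReal.ofReal ((M ^ 2)⁻¹) * ENNReal.ofReal ((r / M) ^ 2) := by
        rw [← ENNReal.ofReal_mul (by positivity)]; congr 1; field_simp
    _ ≤ ENNReal.ofReal ((M ^ 2)⁻¹) * (ENNReal.ofReal (M ^ 2) * μH[2] (P f '' B)) := by gcongr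
    _ = _ := by
        rw [← mul_assoc, ← ENNReal.ofReal_mul (by positivity), inv_mul_cancel₀ (by positivity)]
        simp

lemma cap_aux (x e : E3) (hx : ‖x‖ = 1) (he : ‖e‖ = 1) (τ : ℝ) (h0 : 0 ≤ τ) (h1 : τ ≤ 1) :
    inner ℝ x e * ‖(1 - τ) • x + τ • e‖ ≤ inner ℝ ((1 - τ) • x + τ • e) e := by
  set a : ℝ := inner ℝ x e with ha
  have ha1 : a ≤ 1 := by
    have := real_inner_le_norm x e; rw [hx, he] at this; linarith
  have ha2 : -1 ≤ a := by
    have := neg_le_of_abs_le (abs_real_inner_le_norm x e); rw [hx, he] at this; linarith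
  rw [inner_add_left, inner_smul_left, inner_smul_left, real_inner_self_eq_norm_sq, he, ← ha]
  simp only [RCLike.conj_to_real]
  have hn1 : ‖(1 - τ) • x + τ • e‖ ≤ 1 := by
    refine (norm_add_le _ _).trans ?_
    rw [norm_smul, norm_smul, hx, he, Real.norm_of_nonneg h0,
      Real.norm_of_nonneg (by linarith : 0 ≤ 1 - τ)]
    linarith
  have hn2 : 1 - 2 * τ ≤ ‖(1 - τ) • x + τ • e‖ := by
    have := norm_sub_le_norm_add ((1 - τ) • x) (τ • e)
    rw [norm_smul, norm_smul, hx, he, Real.norm_of_nonneg h0,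
      Real.norm_of_nonneg (by linarith : 0 ≤ 1 - τ)] at this
    linarith
  have hn0 := norm_nonneg ((1 - τ) • x + τ • e)
  rcases le_total 0 a with h | h
  · nlinarith
  · nlinarith

lemma sphere_preconn : IsPreconnected (Metric.sphere (0 : E3) 1) := by
  apply isPreconnected_sphere
  rw [← Module.finrank_eq_rank]
  simp

lemma cap_preconn (c : E3) (d : ℝ) :
    IsPreconnected {x ∈ Metric.sphere (0 : E3) 1 | d < dist x c} := by
  have hd : ∀ x ∈ Metric.sphere (0 : E3) 1, dist x c ^ 2 = 1 - 2 * inner ℝ x c + ‖c‖ ^ 2 := by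
    intro x hx
    rw [mem_sphere_zero_iff_norm] at hx
    rw [dist_eq_norm, norm_sub_sq_real, hx]; ring
  have hmono : ∀ x ∈ Metric.sphere (0 : E3) 1, ∀ y ∈ Metric.sphere (0 : E3) 1,
      d < dist x c → inner ℝ y c ≤ inner ℝ x c → d < dist y c := by
    intro x hx y hy h h'
    refine h.trans_le ?_
    apply le_of_sq_le_sq _ dist_nonneg
    rw [hd x hx, hd y hy]; linarith
  by_cases hall : ∀ x ∈ Metric.sphere (0 : E3) 1, d < dist x c
  · have : {x ∈ Metric.sphere (0 : E3) 1 | d < dist x c} = Metric.sphere (0 : E3) 1 := by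
      ext x; exact ⟨fun h => h.1, fun h => ⟨h, hall x h⟩⟩
    rw [this]; exact sphere_preconn
  push Not at hall
  obtain ⟨z, hz, hzd⟩ := hall
  by_cases hc : c = 0
  · have : {x ∈ Metric.sphere (0 : E3) 1 | d < dist x c} = ∅ := by
      ext x
      simp only [Set.mem_ofPred_eq, Set.mem_empty_iff_false, iff_false, not_and, not_lt]
      intro hx
      simp only [hc, mem_sphere_iff_norm, dist_eq_norm, sub_zero] at *
      rw [hx]; rw [hz] at hzd; exact hzd
    rw [this]; exact isPreconnected_empty
  have hc0 : 0 < ‖c‖ := norm_pos_iff.2 hc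
  set e : E3 := -(‖c‖⁻¹ • c) with he
  have hen : ‖e‖ = 1 := by
    rw [he, norm_neg, norm_smul, norm_inv, norm_norm, inv_mul_cancel₀ hc0.ne']
  have hce : c = -(‖c‖ • e) := by
    rw [he, smul_neg, neg_neg, smul_smul, mul_inv_cancel₀ hc0.ne', one_smul]
  have hin : ∀ x : E3, inner ℝ x c = -(‖c‖ * inner ℝ x e) := by
    intro x
    conv_lhs => rw [hce]
    rw [inner_neg_right, inner_smul_right]
  apply isPreconnected_of_forall e
  rintro x ⟨hx, hxd⟩
  have hxn : ‖x‖ = 1 := by simpa using hx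
  have hx1 : -1 < (inner ℝ x e : ℝ) := by
    by_contra hcon
    push Not at hcon
    refine absurd (hmono x hx z hz hxd ?_) (not_lt.2 hzd)
    rw [hin, hin]
    have hzn : ‖z‖ = 1 := by simpa using hz
    have := neg_le_of_abs_le (abs_real_inner_le_norm z e)
    rw [hzn, hen] at this
    nlinarith
  let v : ℝ → E3 := fun τ => (1 - τ) • x + τ • e
  have hv : ∀ τ ∈ Set.Icc (0:ℝ) 1, v τ ≠ 0 := by
    rintro τ ⟨h0, h1⟩ h
    have h2 : inner ℝ (v τ) x = (0:ℝ) := by rw [h, inner_zero_left]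
    have h3 : inner ℝ (v τ) e = (0:ℝ) := by rw [h, inner_zero_left]
    simp only [v, inner_add_left, inner_smul_left, real_inner_self_eq_norm_sq, hxn, hen,
      RCLike.conj_to_real, real_inner_comm x e] at h2 h3
    have h4 := real_inner_comm x e
    nlinarith
  have hcont : ContinuousOn (fun τ => ‖v τ‖⁻¹ • v τ) (Set.Icc 0 1) := by
    have hvc : Continuous v := by fun_prop
    exact ContinuousOn.smul (ContinuousOn.inv₀ hvc.norm.continuousOn
      fun τ hτ => norm_ne_zero_iff.2 (hv τ hτ)) hvc.continuousOn
  refine ⟨(fun τ => ‖v τ‖⁻¹ • v τ) '' Set.Icc 0 1, ?_, ⟨1, by simp, by simp [v, hen]⟩,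
    ⟨0, by simp, by simp [v, hxn]⟩, isPreconnected_Icc.image _ hcont⟩
  rintro _ ⟨τ, hτ, rfl⟩
  have hvp : 0 < ‖v τ‖ := norm_pos_iff.2 (hv τ hτ)
  have hs : ‖v τ‖⁻¹ • v τ ∈ Metric.sphere (0 : E3) 1 := by
    rw [mem_sphere_zero_iff_norm, norm_smul, norm_inv, norm_norm, inv_mul_cancel₀ hvp.ne']
  refine ⟨hs, hmono x hx _ hs hxd ?_⟩
  rw [hin, hin, inner_smul_left]
  have := cap_aux x e hxn hen τ hτ.1 hτ.2
  change _ * ‖v τ‖ ≤ inner ℝ (v τ) e at this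
  rw [← le_div_iff₀ hvp] at this
  simp only [RCLike.conj_to_real]
  rw [inv_mul_eq_div]
  nlinarith

lemma topo (φ : E3 → E3) (hφ : Set.BijOn φ (Metric.sphere (0 : E3) 1) (Metric.sphere (0 : E3) 1))
    (hφc : Continuous φ) (x0 : E3) (t : ℝ) (c : E3) (d : ℝ)
    (hbd : ∀ x ∈ Metric.sphere (0 : E3) 1, dist x x0 = t → dist (φ x) c ≤ d)
    (hsm : ∀ x ∈ Metric.sphere (0 : E3) 1, ∀ y ∈ Metric.sphere (0 : E3) 1, dist x x0 ≤ t →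
      dist y x0 ≤ t → dist (φ x) (φ y) ≤ 1 / 2) :
    ∀ x ∈ Metric.sphere (0 : E3) 1, ∀ y ∈ Metric.sphere (0 : E3) 1, dist x x0 ≤ t →
      dist y x0 ≤ t → dist (φ x) (φ y) ≤ 2 * d := by
  intro x hx y hy hxt hyt
  set S := Metric.sphere (0 : E3) 1 with hS
  have hSc : IsCompact S := isCompact_sphere _ _
  have hF1 : IsClosed (φ '' (S ∩ {x | dist x x0 ≤ t})) :=
    ((hSc.inter_right (isClosed_le (by fun_prop) (by fun_prop))).image hφc).isClosed
  have hF2 : IsClosed (φ '' (S ∩ {x | t ≤ dist x x0})) :=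
    ((hSc.inter_right (isClosed_le (by fun_prop) (by fun_prop))).image hφc).isClosed
  have hU := cap_preconn c d
  rw [isPreconnected_closed_iff] at hU
  have hU := hU _ _ hF1 hF2 (by
    rintro z ⟨hz, -⟩
    obtain ⟨a, ha, rfl⟩ := hφ.surjOn hz
    rcases le_total (dist a x0) t with h | h
    · exact Or.inl ⟨a, ⟨ha, h⟩, rfl⟩
    · exact Or.inr ⟨a, ⟨ha, h⟩, rfl⟩)
  by_cases h1 : ∃ a ∈ S, dist a x0 ≤ t ∧ d < dist (φ a) c
  · by_cases h2 : ∃ a ∈ S, t ≤ dist a x0 ∧ d < dist (φ a) c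
    · exfalso
      obtain ⟨a, ha, hat, had⟩ := h1
      obtain ⟨b, hb, hbt, hbd'⟩ := h2
      obtain ⟨z, ⟨hz, hzd⟩, ⟨a', ⟨ha', hat'⟩, rfl⟩, ⟨b', ⟨hb', hbt'⟩, hab⟩⟩ :=
        hU ⟨φ a, ⟨hφ.mapsTo ha, had⟩, ⟨a, ⟨ha, hat⟩, rfl⟩⟩
          ⟨φ b, ⟨hφ.mapsTo hb, hbd'⟩, ⟨b, ⟨hb, hbt⟩, rfl⟩⟩
      have : b' = a' := hφ.injOn hb' ha' hab
      subst this
      have := hbd b' hb' (le_antisymm hat' hbt')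
      linarith
    · push Not at h2
      by_cases hd : 1 / 4 ≤ d
      · linarith [hsm x hx y hy hxt hyt]
      exfalso
      push Not at hd
      have key : ∀ i : Fin 3, ∃ a ∈ S, φ a = EuclideanSpace.single i (1:ℝ) := by
        intro i
        exact hφ.surjOn (by simp [hS])
      choose a ha hai using key
      have hfar : ∀ i j, i ≠ j → 1 ≤ dist (φ (a i)) (φ (a j)) := by
        intro i j hij
        rw [hai, hai]
        refine le_trans ?_ (e3_coord_le _ _ i)
        simp [hij]
      have hclose1 : ∀ i j, i ≠ j → ¬ (dist (a i) x0 ≤ t ∧ dist (a j) x0 ≤ t) := by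
        rintro i j hij ⟨h3, h4⟩
        linarith [hfar i j hij, hsm _ (ha i) _ (ha j) h3 h4]
      have hclose2 : ∀ i j, i ≠ j → ¬ (t ≤ dist (a i) x0 ∧ t ≤ dist (a j) x0) := by
        rintro i j hij ⟨h3, h4⟩
        linarith [hfar i j hij, h2 _ (ha i) h3, h2 _ (ha j) h4,
          dist_triangle_right (φ (a i)) (φ (a j)) c]
      have h01 := hclose1 0 1 (by decide)
      have h02 := hclose1 0 2 (by decide)
      have h12 := hclose1 1 2 (by decide)
      have g01 := hclose2 0 1 (by decide)
      have g02 := hclose2 0 2 (by decide)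
      have g12 := hclose2 1 2 (by decide)
      rcases le_total (dist (a 0) x0) t with k0 | k0 <;>
      rcases le_total (dist (a 1) x0) t with k1 | k1 <;>
      rcases le_total (dist (a 2) x0) t with k2 | k2 <;>
      first
      | exact h01 ⟨k0, k1⟩
      | exact h02 ⟨k0, k2⟩
      | exact h12 ⟨k1, k2⟩
      | exact g01 ⟨k0, k1⟩
      | exact g02 ⟨k0, k2⟩
      | exact g12 ⟨k1, k2⟩
  · push Not at h1
    linarith [h1 x hx hxt, h1 y hy hyt, dist_triangle_right (φ x) (φ y) c]

/-- the `q`-th power of the oscillation of `φ` between two points -/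
def ww (φ : E3 → E3) (q : ℝ) (x y : E3) : ℝ≥0∞ := ENNReal.ofReal (dist (φ x) (φ y) ^ q)

/-- double integral on a ball -/
def JJ (φ : E3 → E3) (q : ℝ) (x : E3) (r : ℝ) : ℝ≥0∞ :=
  ∫⁻ y in Metric.closedBall x r, ∫⁻ z in Metric.closedBall x r, ww φ q y z ∂sph ∂sph

/-- local integral around a point -/
def hh (φ : E3 → E3) (q : ℝ) (ρ : ℝ) (y : E3) : ℝ≥0∞ :=
  ∫⁻ z in Metric.closedBall y ρ, ww φ q y z ∂sph

lemma sph_finite {P M} (hP : Par P M) : IsFiniteMeasure sph := by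
  obtain ⟨C, hC, h⟩ := sph_upper hP
  constructor
  have h1 : sph Set.univ ≤ sph (Metric.closedBall 0 1) := by
    rw [sph, Measure.restrict_apply MeasurableSet.univ,
      Measure.restrict_apply measurableSet_closedBall, Set.univ_inter]
    exact measure_mono (Set.subset_inter Metric.sphere_subset_closedBall subset_rfl)
  exact h1.trans_lt ((h 0 1 one_pos).trans_lt ENNReal.ofReal_lt_top)

lemma ww_meas {φ : E3 → E3} (hφ : Continuous φ) {q : ℝ} (hq : 0 < q) :
    Measurable (fun p : E3 × E3 => ww φ q p.1 p.2) := by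
  have : Continuous (fun p : E3 × E3 => ww φ q p.1 p.2) := by
    unfold ww
    refine ENNReal.continuous_ofReal.comp (Continuous.rpow_const ?_ fun _ => Or.inr hq.le)
    fun_prop
  exact this.measurable

lemma ww_meas_right {φ : E3 → E3} (hφ : Continuous φ) {q : ℝ} (hq : 0 < q) (y : E3) :
    Measurable (fun z : E3 => ww φ q y z) := by
  have : Continuous (fun z : E3 => ww φ q y z) := by
    unfold ww
    refine ENNReal.continuous_ofReal.comp (Continuous.rpow_const ?_ fun _ => Or.inr hq.le)
    fun_prop
  exact this.measurable

lemma ww_symm (φ : E3 → E3) (q : ℝ) (x y : E3) : ww φ q x y = ww φ q y x := by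
  simp only [ww, dist_comm]

lemma ww_quasi (φ : E3 → E3) {q : ℝ} (hq : 0 < q) (x y z : E3) :
    ww φ q x y ≤ ENNReal.ofReal (2 ^ q) * (ww φ q x z + ww φ q y z) := by
  unfold ww
  rw [← ENNReal.ofReal_add (by positivity) (by positivity), ← ENNReal.ofReal_mul (by positivity)]
  apply ENNReal.ofReal_le_ofReal
  have h := dist_triangle_right (φ x) (φ y) (φ z)
  rcases le_total (dist (φ x) (φ z)) (dist (φ y) (φ z)) with h1 | h1
  · calc dist (φ x) (φ y) ^ q ≤ (2 * dist (φ y) (φ z)) ^ q := by gcongr; linarith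
      _ = 2 ^ q * dist (φ y) (φ z) ^ q := Real.mul_rpow (by norm_num) dist_nonneg
      _ ≤ _ := by gcongr; linarith [Real.rpow_nonneg (dist_nonneg (x := φ x) (y := φ z)) q]
  · calc dist (φ x) (φ y) ^ q ≤ (2 * dist (φ x) (φ z)) ^ q := by gcongr; linarith
      _ = 2 ^ q * dist (φ x) (φ z) ^ q := Real.mul_rpow (by norm_num) dist_nonneg
      _ ≤ _ := by gcongr; linarith [Real.rpow_nonneg (dist_nonneg (x := φ y) (y := φ z)) q]

lemma hh_meas [IsFiniteMeasure sph] {φ : E3 → E3} (hφ : Continuous φ) {q : ℝ} (hq : 0 < q)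
    (ρ : ℝ) : Measurable (hh φ q ρ) := by
  have h1 : MeasurableSet {p : E3 × E3 | dist p.2 p.1 ≤ ρ} :=
    (isClosed_le (by fun_prop) (by fun_prop)).measurableSet
  have h2 := ((ww_meas hφ hq).indicator h1).lintegral_prod_right' (ν := sph)
  convert h2 using 2 with y
  rw [hh, ← lintegral_indicator measurableSet_closedBall]
  rfl

lemma exists_good [IsFiniteMeasure sph] {φ : E3 → E3} (hφ : Continuous φ) {q : ℝ} (hq : 0 < q)
    (x : E3) (r : ℝ) (h : sph (Metric.closedBall x r) ≠ 0) :
    ∃ y ∈ Metric.closedBall x r, (∫⁻ z in Metric.closedBall x r, ww φ q y z ∂sph) *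
      sph (Metric.closedBall x r) ≤ JJ φ q x r := by
  obtain ⟨y, hy, hle⟩ := exists_le_setLAverage (μ := sph) (s := Metric.closedBall x r)
    (f := fun y => ∫⁻ z in Metric.closedBall x r, ww φ q y z ∂sph) h (measure_ne_top _ _)
    ((ww_meas hφ hq).lintegral_prod_right').aemeasurable
  refine ⟨y, hy, ?_⟩
  rw [setLAverage_eq, ENNReal.le_div_iff_mul_le (Or.inl h) (Or.inl (measure_ne_top _ _))] at hle
  exact hle

lemma link [IsFiniteMeasure sph] {φ : E3 → E3} (hφ : Continuous φ) {q : ℝ} (hq : 0 < q)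
    (B B' : Set E3) (hBB : B' ⊆ B) (y y' : E3)
    (b V : ℝ) (hb : 0 < b) (hV : 0 ≤ V)
    (h1 : ENNReal.ofReal b ≤ sph B) (h2 : ENNReal.ofReal b ≤ sph B')
    (h3 : (∫⁻ z in B, ww φ q y z ∂sph) * sph B ≤ ENNReal.ofReal V)
    (h4 : (∫⁻ z in B', ww φ q y' z ∂sph) * sph B' ≤ ENNReal.ofReal V) :
    dist (φ y) (φ y') ^ q ≤ 2 * 2 ^ q * V / b ^ 2 := by
  have hm : ∀ y, Measurable (fun z => ww φ q y z) := fun y =>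
    ww_meas_right hφ hq y
  have e1 : (∫⁻ z in B', ww φ q y z ∂sph) * ENNReal.ofReal b ≤ ENNReal.ofReal V :=
    (mul_le_mul' (lintegral_mono_set (μ := sph) hBB) h1).trans h3
  have e2 : (∫⁻ z in B', ww φ q y' z ∂sph) * ENNReal.ofReal b ≤ ENNReal.ofReal V :=
    (mul_le_mul_right h2 _).trans h4
  have e3 : ww φ q y y' * ENNReal.ofReal b ≤ ENNReal.ofReal (2 ^ q) *
      ((∫⁻ z in B', ww φ q y z ∂sph) + ∫⁻ z in B', ww φ q y' z ∂sph) := by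
    rw [← lintegral_add_left (hm y), ← lintegral_const_mul' _ _ ENNReal.ofReal_ne_top]
    calc ww φ q y y' * ENNReal.ofReal b ≤ ww φ q y y' * sph B' := by gcongr
      _ = ∫⁻ z in B', ww φ q y y' ∂sph := by rw [setLIntegral_const]
      _ ≤ _ := lintegral_mono fun z => ww_quasi φ hq y y' z
  have e4 : ww φ q y y' * ENNReal.ofReal b * ENNReal.ofReal b ≤
      ENNReal.ofReal (2 ^ q) * (ENNReal.ofReal V + ENNReal.ofReal V) := by
    refine (mul_le_mul' e3 le_rfl).trans ?_
    rw [mul_assoc, add_mul]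
    gcongr
  rw [← ENNReal.ofReal_add hV hV, ← ENNReal.ofReal_mul (by positivity), ww,
    ← ENNReal.ofReal_mul (by positivity), ← ENNReal.ofReal_mul (by positivity),
    ENNReal.ofReal_le_ofReal_iff (by positivity)] at e4
  rw [le_div_iff₀ (by positivity)]
  linarith

lemma chain {P M} (hP : Par P M) {φ : E3 → E3} (hφ : Continuous φ) {q : ℝ} (hq : 0 < q)
    {η : ℝ} (hη0 : 0 < η) (hη1 : η < 1) :
    ∃ C : ℝ, 0 < C ∧ ∀ x0 ∈ Metric.sphere (0 : E3) 1, ∀ r : ℝ, 0 < r → r ≤ 1 / 4 →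
      ∃ c0 : E3, ∀ T : ℝ, 0 ≤ T → ∀ x ∈ Metric.sphere (0 : E3) 1, dist x x0 ≤ 2 * r →
        JJ φ q x0 (4 * r) ≤ ENNReal.ofReal (T * r ^ 4) →
        (∀ j : ℕ, JJ φ q x (r / 2 ^ j) ≤
          ENNReal.ofReal (T * (η ^ j) ^ q * (r / 2 ^ j) ^ 4)) →
        dist (φ x) c0 ≤ (C * T) ^ (1 / q) := by
  have := sph_finite hP
  obtain ⟨c, hc, hlow⟩ := sph_lower hP
  have hη' : 0 < 1 - η := by linarith
  set D : ℝ := 32 * 2 ^ q / c ^ 2 with hD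
  have hD0 : 0 < D := by positivity
  refine ⟨D * (1 + 1 / (1 - η)) ^ q, by positivity, fun x0 hx0 r hr hr1 => ?_⟩
  have hpos : ∀ x ∈ Metric.sphere (0 : E3) 1, ∀ r : ℝ, 0 < r → r ≤ 1 →
      sph (Metric.closedBall x r) ≠ 0 := by
    intro x hx r h0 h1
    have := hlow x hx r h0 h1
    exact (lt_of_lt_of_le (ENNReal.ofReal_pos.2 (by positivity)) this).ne'
  obtain ⟨y0, hy0, hg0⟩ := exists_good hφ hq x0 (4 * r)
    (hpos x0 hx0 _ (by linarith) (by linarith))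
  refine ⟨φ y0, fun T hT x hx hxx hJ0 hJ => ?_⟩
  have hrj : ∀ j : ℕ, 0 < r / 2 ^ j := fun j => by positivity
  have hrj' : ∀ j : ℕ, r / 2 ^ j ≤ r := fun j => div_le_self hr.le (one_le_pow₀ (by norm_num))
  have hrs : ∀ j : ℕ, r / 2 ^ (j + 1) = r / 2 ^ j / 2 := fun j => by rw [pow_succ]; field_simp
  have hex := fun j : ℕ => exists_good hφ hq x (r / 2 ^ j)
    (hpos x hx _ (hrj j) (by linarith [hrj' j]))
  choose y hy hg using hex
  have root : ∀ u v : ℝ, 0 ≤ u → 0 ≤ v → u ^ q ≤ v → u ≤ v ^ (1 / q) := by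
    intro u v hu hv h
    rw [one_div, Real.le_rpow_inv_iff_of_pos hu hv hq]
    exact h
  have step : ∀ j, dist (φ (y j)) (φ (y (j + 1))) ≤ (D * T) ^ (1 / q) * η ^ j := by
    intro j
    have h1 := link hφ hq (Metric.closedBall x (r / 2 ^ j)) (Metric.closedBall x (r / 2 ^ (j + 1)))
      (Metric.closedBall_subset_closedBall (by rw [hrs]; linarith [hrj j])) (y j) (y (j + 1))
      (c * (r / 2 ^ (j + 1)) ^ 2) (T * (η ^ j) ^ q * (r / 2 ^ j) ^ 4) (by positivity)
      (by positivity)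
      (le_trans (ENNReal.ofReal_le_ofReal <| mul_le_mul_of_nonneg_left
        (pow_le_pow_left₀ (hrj _).le (by rw [hrs]; linarith [hrj j]) 2) hc.le)
        (hlow x hx _ (hrj j) (by linarith [hrj' j])))
      (hlow x hx _ (hrj _) (by linarith [hrj' (j + 1)]))
      ((hg j).trans (hJ j))
      (((hg (j + 1)).trans (hJ (j + 1))).trans (ENNReal.ofReal_le_ofReal (by
        have : η ^ (j + 1) ≤ η ^ j := pow_le_pow_of_le_one hη0.le hη1.le (Nat.le_succ j)
        have h2 : r / 2 ^ (j + 1) ≤ r / 2 ^ j := by rw [hrs]; linarith [hrj j]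
        gcongr)))
    have h2 : 2 * 2 ^ q * (T * (η ^ j) ^ q * (r / 2 ^ j) ^ 4) / (c * (r / 2 ^ (j + 1)) ^ 2) ^ 2
        = D * T * (η ^ j) ^ q := by
      rw [hrs, hD]
      have := (hrj j).ne'
      field_simp
      ring
    rw [h2] at h1
    have h3 := root _ _ dist_nonneg (by positivity) h1
    rwa [Real.mul_rpow (by positivity) (by positivity), ← Real.rpow_mul (by positivity),
      mul_one_div_cancel hq.ne', Real.rpow_one] at h3
  have first : dist (φ y0) (φ (y 0)) ≤ (D * T) ^ (1 / q) := by
    have h00 := hJ 0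
    simp only [pow_zero, div_one, Real.one_rpow, mul_one] at h00
    have hg00 := hg 0
    simp only [pow_zero, div_one] at hg00
    have h1 := link hφ hq (Metric.closedBall x0 (4 * r)) (Metric.closedBall x r)
      (Metric.closedBall_subset_closedBall' (by linarith)) y0 (y 0)
      (c * r ^ 2) (T * r ^ 4) (by positivity) (by positivity)
      (le_trans (ENNReal.ofReal_le_ofReal (by gcongr; linarith))
        (hlow x0 hx0 (4 * r) (by linarith) (by linarith)))
      (hlow x hx r hr (by linarith)) (hg0.trans hJ0) (hg00.trans h00)
    apply root _ _ dist_nonneg (by positivity)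
    refine h1.trans ?_
    have h2 : 2 * 2 ^ q * (T * r ^ 4) / (c * r ^ 2) ^ 2 = D * T / 16 := by
      rw [hD]; field_simp; ring
    rw [h2]
    have : 0 ≤ D * T := by positivity
    linarith
  have htend : Filter.Tendsto y Filter.atTop (nhds x) := by
    rw [tendsto_iff_dist_tendsto_zero]
    refine squeeze_zero (fun _ => dist_nonneg) (fun j => Metric.mem_closedBall.1 (hy j)) ?_
    have := (tendsto_pow_atTop_nhds_zero_of_lt_one (r := (1/2:ℝ)) (by norm_num)
      (by norm_num)).const_mul r
    simpa [div_eq_mul_inv] using this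
  have hlim := dist_le_of_le_geometric_of_tendsto₀ η ((D * T) ^ (1 / q)) hη1 step
    ((hφ.tendsto x).comp htend)
  change dist (φ (y 0)) (φ x) ≤ _ at hlim
  have hfin : dist (φ x) (φ y0) ≤ (D * T) ^ (1 / q) * (1 + 1 / (1 - η)) := by
    have h3 := dist_triangle_right (φ x) (φ y0) (φ (y 0))
    rw [dist_comm (φ x) (φ (y 0))] at h3
    have : (D * T) ^ (1 / q) * (1 + 1 / (1 - η)) =
      (D * T) ^ (1 / q) + (D * T) ^ (1 / q) / (1 - η) := by ring
    linarith
  refine hfin.trans (le_of_eq ?_)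
  have : D * (1 + 1 / (1 - η)) ^ q * T = (D * T) * (1 + 1 / (1 - η)) ^ q := by ring
  rw [this, Real.mul_rpow (x := D * T) (by positivity) (by positivity),
    ← Real.rpow_mul (by positivity), mul_one_div_cancel hq.ne', Real.rpow_one]

/-- the weighted sum controlling the oscillation on a ball -/
def EE (φ : E3 → E3) (q η : ℝ) (x0 : E3) (r : ℝ) : ℝ≥0∞ :=
  ∑' j : ℕ, ENNReal.ofReal (2 * ((η ^ j) ^ q)⁻¹ * (2 ^ j)⁻¹ * ((r / 2 ^ j) ^ 4)⁻¹) *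
    ∫⁻ y in Metric.closedBall x0 (4 * r), hh φ q (8 * (r / 2 ^ j)) y ∂sph

/-- integral over an annulus -/
def RR (φ : E3 → E3) (q : ℝ) (x0 : E3) (r ρ t : ℝ) : ℝ≥0∞ :=
  ∫⁻ y in Metric.closedBall x0 (4 * r),
    Set.indicator {p : ℝ × E3 | |dist p.2 x0 - p.1| ≤ ρ} (fun p => hh φ q (8 * ρ) p.2) (t, y) ∂sph

lemma JJ_le_hh (φ : E3 → E3) (q : ℝ) (x : E3) (r ρ : ℝ) (h : 2 * r ≤ ρ) :
    JJ φ q x r ≤ ∫⁻ y in Metric.closedBall x r, hh φ q ρ y ∂sph := by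
  refine setLIntegral_mono' measurableSet_closedBall fun y hy => ?_
  refine lintegral_mono_set (Metric.closedBall_subset_closedBall' ?_)
  rw [Metric.mem_closedBall, dist_comm] at hy
  linarith

lemma annulus_meas (x0 : E3) (ρ : ℝ) : MeasurableSet {p : ℝ × E3 | |dist p.2 x0 - p.1| ≤ ρ} :=
  (isClosed_le (by fun_prop) (by fun_prop)).measurableSet

lemma JJ_le_RR (φ : E3 → E3) (q : ℝ) (x0 x : E3) (r ρ : ℝ) (h0 : 0 < ρ) (hρ : ρ ≤ r)
    (hx : dist x x0 ≤ 2 * r) : JJ φ q x ρ ≤ RR φ q x0 r ρ (dist x x0) := by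
  refine (JJ_le_hh φ q x ρ (8 * ρ) (by linarith)).trans ?_
  rw [RR]
  have hA : MeasurableSet {y : E3 | |dist y x0 - dist x x0| ≤ ρ} :=
    (isClosed_le (by fun_prop) (by fun_prop)).measurableSet
  have : ∀ y, Set.indicator {p : ℝ × E3 | |dist p.2 x0 - p.1| ≤ ρ}
      (fun p => hh φ q (8 * ρ) p.2) (dist x x0, y) =
      Set.indicator {y : E3 | |dist y x0 - dist x x0| ≤ ρ} (hh φ q (8 * ρ)) y := fun y => rfl
  simp_rw [this]
  rw [lintegral_indicator hA, Measure.restrict_restrict hA]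
  refine lintegral_mono_set ?_
  intro y hy
  rw [Metric.mem_closedBall] at hy
  have h1 := dist_triangle y x x0
  have h2 := dist_triangle x y x0
  rw [dist_comm x y] at h2
  have h3 : |dist y x0 - dist x x0| ≤ ρ := abs_le.2 ⟨by linarith, by linarith⟩
  refine ⟨h3, ?_⟩
  rw [Metric.mem_closedBall]
  linarith

lemma RR_meas [IsFiniteMeasure sph] {φ : E3 → E3} (hφ : Continuous φ) {q : ℝ} (hq : 0 < q)
    (x0 : E3) (r ρ : ℝ) : Measurable (RR φ q x0 r ρ) := by
  have h1 : Measurable (fun p : ℝ × E3 => hh φ q (8 * ρ) p.2) :=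
    (hh_meas hφ hq _).comp measurable_snd
  exact (h1.indicator (annulus_meas x0 ρ)).lintegral_prod_right'

lemma RR_int [IsFiniteMeasure sph] {φ : E3 → E3} (hφ : Continuous φ) {q : ℝ} (hq : 0 < q)
    (x0 : E3) (r ρ : ℝ) (I : Set ℝ) : ∫⁻ t in I, RR φ q x0 r ρ t ≤
      ENNReal.ofReal (2 * ρ) * ∫⁻ y in Metric.closedBall x0 (4 * r), hh φ q (8 * ρ) y ∂sph := by
  have h1 : Measurable (fun p : ℝ × E3 => hh φ q (8 * ρ) p.2) :=
    (hh_meas hφ hq _).comp measurable_snd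
  have h2 := h1.indicator (annulus_meas x0 ρ)
  unfold RR
  rw [lintegral_lintegral_swap (f := fun t y => Set.indicator
    {p : ℝ × E3 | |dist p.2 x0 - p.1| ≤ ρ} (fun p => hh φ q (8 * ρ) p.2) (t, y)) h2.aemeasurable, ← lintegral_const_mul _ (hh_meas hφ hq _)]
  refine lintegral_mono fun y => ?_
  refine (setLIntegral_le_lintegral _ _).trans ?_
  have : ∀ t, Set.indicator {p : ℝ × E3 | |dist p.2 x0 - p.1| ≤ ρ}
      (fun p => hh φ q (8 * ρ) p.2) (t, y) =
      Set.indicator (Metric.closedBall (dist y x0) ρ) (fun _ => hh φ q (8 * ρ) y) t := by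
    intro t
    simp only [Set.indicator, Metric.mem_closedBall, Real.dist_eq]
    rw [abs_sub_comm t]
    rfl
  simp_rw [this]
  rw [lintegral_indicator measurableSet_closedBall, setLIntegral_const, Real.volume_closedBall,
    mul_comm]

lemma main_osc {P M} (hP : Par P M) {φ : E3 → E3} (hφ : Continuous φ)
    (hbij : Set.BijOn φ (Metric.sphere (0 : E3) 1) (Metric.sphere (0 : E3) 1))
    {q : ℝ} (hq : 0 < q) {η : ℝ} (hη0 : 0 < η) (hη1 : η < 1) :
    ∃ C : ℝ, 0 < C ∧ ∀ x0 ∈ Metric.sphere (0 : E3) 1, ∀ r : ℝ, 0 < r → r ≤ 1 / 4 →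
      (∀ x ∈ Metric.sphere (0 : E3) 1, ∀ y ∈ Metric.sphere (0 : E3) 1, dist x x0 ≤ 2 * r →
        dist y x0 ≤ 2 * r → dist (φ x) (φ y) ≤ 1 / 2) →
      ∀ x ∈ Metric.sphere (0 : E3) 1, ∀ y ∈ Metric.sphere (0 : E3) 1, dist x x0 ≤ r →
        dist y x0 ≤ r → ww φ q x y ≤ ENNReal.ofReal C * EE φ q η x0 r := by
  have := sph_finite hP
  obtain ⟨C, hC, hch⟩ := chain hP hφ hq hη0 hη1
  refine ⟨2 ^ q * C, by positivity, fun x0 hx0 r hr hr1 hsm a ha b hb har hbr => ?_⟩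
  obtain ⟨c0, hc0⟩ := hch x0 hx0 r hr hr1
  by_cases htop : EE φ q η x0 r = ⊤
  · rw [htop, ENNReal.mul_top (ENNReal.ofReal_pos.2 (by positivity)).ne']
    exact le_top
  set T := (EE φ q η x0 r).toReal with hT
  have hTE : ENNReal.ofReal T = EE φ q η x0 r := ENNReal.ofReal_toReal htop
  have hT0 : 0 ≤ T := ENNReal.toReal_nonneg
  have hrj : ∀ j : ℕ, 0 < r / 2 ^ j := fun j => by positivity
  have hrj' : ∀ j : ℕ, r / 2 ^ j ≤ r := fun j => div_le_self hr.le (one_le_pow₀ (by norm_num))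
  -- choice of a good radius
  obtain ⟨t, ht, hft⟩ : ∃ t ∈ Set.Icc r (2 * r),
      ∑' j : ℕ, ENNReal.ofReal (((η ^ j) ^ q)⁻¹ * ((r / 2 ^ j) ^ 4)⁻¹) *
        RR φ q x0 r (r / 2 ^ j) t ≤ EE φ q η x0 r := by
    have hv : volume (Set.Icc r (2 * r)) = ENNReal.ofReal r := by
      rw [Real.volume_Icc]; congr 1; ring
    have hv0 : volume (Set.Icc r (2 * r)) ≠ 0 := by
      rw [hv]; exact (ENNReal.ofReal_pos.2 hr).ne'
    have hv1 : volume (Set.Icc r (2 * r)) ≠ ⊤ := by rw [hv]; exact ENNReal.ofReal_ne_top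
    have hm : ∀ j : ℕ, Measurable (fun t => ENNReal.ofReal (((η ^ j) ^ q)⁻¹ *
        ((r / 2 ^ j) ^ 4)⁻¹) * RR φ q x0 r (r / 2 ^ j) t) := fun j =>
      (RR_meas hφ hq x0 r _).const_mul _
    obtain ⟨t, ht, hle⟩ := exists_le_setLAverage (μ := volume) (s := Set.Icc r (2 * r))
      (f := fun t => ∑' j : ℕ, ENNReal.ofReal (((η ^ j) ^ q)⁻¹ * ((r / 2 ^ j) ^ 4)⁻¹) *
        RR φ q x0 r (r / 2 ^ j) t) hv0 hv1 (Measurable.tsum hm).aemeasurable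
    refine ⟨t, ht, hle.trans ?_⟩
    rw [setLAverage_eq]
    refine ENNReal.div_le_of_le_mul ?_
    rw [hv, lintegral_tsum fun j => (hm j).aemeasurable, EE, ← ENNReal.tsum_mul_right]
    refine ENNReal.tsum_le_tsum fun j => ?_
    rw [lintegral_const_mul _ (RR_meas hφ hq x0 r _)]
    refine (mul_le_mul' le_rfl (RR_int hφ hq x0 r (r / 2 ^ j) _)).trans (le_of_eq ?_)
    rw [← mul_assoc, ← ENNReal.ofReal_mul (by positivity),
      mul_right_comm (ENNReal.ofReal (2 * ((η ^ j) ^ q)⁻¹ * (2 ^ j)⁻¹ * ((r / 2 ^ j) ^ 4)⁻¹)), ← ENNReal.ofReal_mul (by positivity)]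
    congr 2
    have := (hrj j).ne'
    field_simp
  have hunit : ∀ (k : ℝ) (X : ℝ≥0∞), 0 < k → ENNReal.ofReal k⁻¹ * X ≤ EE φ q η x0 r →
      X ≤ ENNReal.ofReal (T * k) := by
    intro k X hk h
    rw [← hTE] at h
    calc X = ENNReal.ofReal k * (ENNReal.ofReal k⁻¹ * X) := by
          rw [← mul_assoc, ← ENNReal.ofReal_mul hk.le, mul_inv_cancel₀ hk.ne']; simp
      _ ≤ ENNReal.ofReal k * ENNReal.ofReal T := by gcongr
      _ = _ := by rw [← ENNReal.ofReal_mul hk.le, mul_comm]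
  have hbig : JJ φ q x0 (4 * r) ≤ ENNReal.ofReal (T * r ^ 4) := by
    refine (JJ_le_hh φ q x0 (4 * r) (8 * r) (by linarith)).trans ?_
    have h0 := ENNReal.le_tsum (f := fun j : ℕ => ENNReal.ofReal (2 * ((η ^ j) ^ q)⁻¹ *
      (2 ^ j)⁻¹ * ((r / 2 ^ j) ^ 4)⁻¹) *
        ∫⁻ y in Metric.closedBall x0 (4 * r), hh φ q (8 * (r / 2 ^ j)) y ∂sph) 0
    simp only [pow_zero, Real.one_rpow, inv_one, mul_one, div_one] at h0
    apply hunit _ _ (by positivity)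
    refine le_trans ?_ h0
    gcongr
    have : 0 < (r ^ 4)⁻¹ := by positivity
    linarith
  have hsmall : ∀ x ∈ Metric.sphere (0 : E3) 1, dist x x0 = t →
      dist (φ x) c0 ≤ (C * T) ^ (1 / q) := by
    intro x hx hxt
    refine hc0 T hT0 x hx (by rw [hxt]; exact ht.2) hbig fun j => ?_
    refine (JJ_le_RR φ q x0 x r _ (hrj j) (hrj' j) (by rw [hxt]; exact ht.2)).trans ?_
    rw [hxt, mul_assoc]
    apply hunit _ _ (by positivity)
    rw [mul_inv]
    exact (ENNReal.le_tsum j).trans hft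
  have hfin := topo φ hbij hφ x0 t c0 _ hsmall
    (fun x hx y hy h1 h2 => hsm x hx y hy (h1.trans ht.2) (h2.trans ht.2)) a ha b hb
    (har.trans ht.1) (hbr.trans ht.1)
  rw [← hTE, ww, ← ENNReal.ofReal_mul (by positivity)]
  apply ENNReal.ofReal_le_ofReal
  calc dist (φ a) (φ b) ^ q ≤ (2 * (C * T) ^ (1 / q)) ^ q := by gcongr
    _ = 2 ^ q * C * T := by
      rw [Real.mul_rpow (by positivity) (by positivity), ← Real.rpow_mul (by positivity),
        one_div_mul_cancel hq.ne', Real.rpow_one]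
      ring

/-- the Gagliardo double integral -/
def II (φ : E3 → E3) (q : ℝ) : ℝ≥0∞ :=
  ∫⁻ x, ∫⁻ y, ENNReal.ofReal (dist (φ x) (φ y) ^ q / dist x y ^ (q + 1)) ∂sph ∂sph

lemma geom_cut (s Y : ℝ) (hs : 1 < s) (hY : 0 ≤ Y) (n : ℕ) :
    ∑ m ∈ Finset.range n, (if s ^ m ≤ Y then s ^ m else 0) ≤ s / (s - 1) * Y := by
  have hs1 : 0 < s - 1 := by linarith
  induction n with
  | zero => simp; positivity
  | succ n ih =>
    by_cases h : s ^ n ≤ Y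
    · calc ∑ m ∈ Finset.range (n + 1), (if s ^ m ≤ Y then s ^ m else 0)
          ≤ ∑ m ∈ Finset.range (n + 1), s ^ m := by
            refine Finset.sum_le_sum fun m _ => ?_
            split_ifs
            · exact le_rfl
            · positivity
        _ = (s ^ (n + 1) - 1) / (s - 1) := geom_sum_eq hs.ne' _
        _ ≤ s * s ^ n / (s - 1) := by
            rw [pow_succ']; gcongr; linarith
        _ ≤ s * Y / (s - 1) := by gcongr
        _ = _ := by ring
    · rw [Finset.sum_range_succ, if_neg h, add_zero]; exact ih

lemma pt_bound (φ : E3 → E3) {q : ℝ} (hq : 0 < q) {M : ℝ} (hM : 1 ≤ M) :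
    ∃ C : ℝ, 0 < C ∧ ∀ y z : E3, ∑' m : ℕ, ENNReal.ofReal (((2:ℝ) ^ (q + 1)) ^ m) *
      (Metric.closedBall y (8 * (M / 2 ^ m))).indicator (fun z => ww φ q y z) z ≤
      ENNReal.ofReal C * ENNReal.ofReal (dist (φ y) (φ z) ^ q / dist y z ^ (q + 1)) := by
  set s : ℝ := 2 ^ (q + 1) with hs
  have hs1 : 1 < s := Real.one_lt_rpow (by norm_num) (by linarith)
  have hs2 : 0 < s - 1 := by linarith
  refine ⟨s / (s - 1) * (8 * M) ^ (q + 1), by positivity, fun y z => ?_⟩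
  rcases eq_or_ne y z with rfl | hyz
  · have : ∀ m : ℕ, ENNReal.ofReal (s ^ m) *
      (Metric.closedBall y (8 * (M / 2 ^ m))).indicator (fun z => ww φ q y z) y = 0 := by
      intro m
      simp only [Set.indicator, ww, dist_self, Real.zero_rpow hq.ne']
      simp
    simp [this]
  have hd : 0 < dist y z := dist_pos.2 hyz
  apply ENNReal.tsum_le_of_sum_range_le
  intro n
  set Y : ℝ := (8 * M / dist y z) ^ (q + 1) with hY
  have hterm : ∀ m : ℕ, ENNReal.ofReal (s ^ m) *
      (Metric.closedBall y (8 * (M / 2 ^ m))).indicator (fun z => ww φ q y z) z ≤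
      ENNReal.ofReal ((if s ^ m ≤ Y then s ^ m else 0) * dist (φ y) (φ z) ^ q) := by
    intro m
    by_cases hz : z ∈ Metric.closedBall y (8 * (M / 2 ^ m))
    · rw [Set.indicator_of_mem hz, ww, ← ENNReal.ofReal_mul (by positivity)]
      have : s ^ m ≤ Y := by
        rw [hs, hY, ← Real.rpow_natCast, ← Real.rpow_mul (by norm_num), mul_comm,
          Real.rpow_mul (by norm_num), Real.rpow_natCast]
        gcongr
        rw [Metric.mem_closedBall, dist_comm] at hz
        rw [le_div_iff₀ hd]
        have h2 : (0:ℝ) < 2 ^ m := by positivity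
        calc 2 ^ m * dist y z ≤ 2 ^ m * (8 * (M / 2 ^ m)) := by gcongr
          _ = 8 * M := by field_simp
      rw [if_pos this]
    · rw [Set.indicator_of_notMem hz]; simp
  refine (Finset.sum_le_sum fun m _ => hterm m).trans ?_
  rw [← ENNReal.ofReal_sum_of_nonneg, ← ENNReal.ofReal_mul (by positivity), ← Finset.sum_mul]
  · apply ENNReal.ofReal_le_ofReal
    have := geom_cut s Y hs1 (by positivity) n
    calc _ ≤ s / (s - 1) * Y * dist (φ y) (φ z) ^ q := by gcongr
      _ = _ := by
        rw [hY, Real.div_rpow (by positivity) (by positivity)]; field_simp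
  · intro m _
    split_ifs <;> positivity

lemma sum_g [IsFiniteMeasure sph] {φ : E3 → E3} (hφ : Continuous φ) {q : ℝ} (hq : 0 < q) {M : ℝ}
    (hM : 1 ≤ M) : ∃ C : ℝ, 0 < C ∧ ∑' m : ℕ, ENNReal.ofReal (((2:ℝ) ^ (q + 1)) ^ m) *
      ∫⁻ y, hh φ q (8 * (M / 2 ^ m)) y ∂sph ≤ ENNReal.ofReal C * II φ q := by
  obtain ⟨C, hC, hpt⟩ := pt_bound φ hq hM
  refine ⟨C, hC, ?_⟩
  simp_rw [← lintegral_const_mul _ (hh_meas hφ hq _)]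
  rw [← lintegral_tsum fun m => ((hh_meas hφ hq _).const_mul _).aemeasurable, II,
    ← lintegral_const_mul' _ _ ENNReal.ofReal_ne_top]
  refine lintegral_mono fun y => ?_
  have hm : ∀ m : ℕ, Measurable fun z => (Metric.closedBall y (8 * (M / 2 ^ m))).indicator
      (fun z => ww φ q y z) z := fun m =>
    (ww_meas_right hφ hq y).indicator measurableSet_closedBall
  have h1 : ∀ m : ℕ, ENNReal.ofReal (((2:ℝ) ^ (q + 1)) ^ m) * hh φ q (8 * (M / 2 ^ m)) y =
      ∫⁻ z, ENNReal.ofReal (((2:ℝ) ^ (q + 1)) ^ m) *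
        (Metric.closedBall y (8 * (M / 2 ^ m))).indicator (fun z => ww φ q y z) z ∂sph := by
    intro m
    rw [lintegral_const_mul _ (hm m), lintegral_indicator measurableSet_closedBall, hh]
  simp_rw [h1]
  rw [← lintegral_tsum fun m => ((hm m).const_mul _).aemeasurable,
    ← lintegral_const_mul' _ _ ENNReal.ofReal_ne_top]
  exact lintegral_mono fun z => hpt y z

/-- reference corner of a dyadic piece -/
def ctr (P : Fin 6 → ℝ × ℝ → E3) (k : ℕ) (Q : Fin 6 × Fin (2 ^ k) × Fin (2 ^ k)) : E3 :=
  P Q.1 (((Q.2.1 : ℕ) : ℝ) / 2 ^ k, ((Q.2.2 : ℕ) : ℝ) / 2 ^ k)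

lemma dyadicSq_sub (k : ℕ) (i j : Fin (2 ^ k)) : dyadicSq k i j ⊆ Isq := by
  have h : ∀ i : Fin (2 ^ k), Set.Icc (((i : ℕ) : ℝ) / 2 ^ k) ((((i : ℕ) : ℝ) + 1) / 2 ^ k) ⊆
      Set.Icc (0:ℝ) 1 := by
    intro i
    apply Set.Icc_subset_Icc (by positivity)
    rw [div_le_one (by positivity)]
    have : (i : ℕ) + 1 ≤ 2 ^ k := i.2
    exact_mod_cast this
  exact Set.prod_mono (h i) (h j)

lemma corner_mem (k : ℕ) (i j : ℕ) :
    (((i : ℝ) / 2 ^ k, (j : ℝ) / 2 ^ k) : ℝ × ℝ) ∈ dyadicSq k i j := by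
  have : ∀ i : ℕ, (i : ℝ) / 2 ^ k ≤ ((i : ℝ) + 1) / 2 ^ k := fun i => by gcongr; linarith
  exact ⟨⟨le_rfl, this i⟩, ⟨le_rfl, this j⟩⟩

lemma dyadicSq_dist (k i j : ℕ) (p p' : ℝ × ℝ) (hp : p ∈ dyadicSq k i j)
    (hp' : p' ∈ dyadicSq k i j) : dist p p' ≤ 1 / 2 ^ k := by
  have h : ∀ (i : ℕ) (a b : ℝ), a ∈ Set.Icc ((i : ℝ) / 2 ^ k) (((i : ℝ) + 1) / 2 ^ k) →
      b ∈ Set.Icc ((i : ℝ) / 2 ^ k) (((i : ℝ) + 1) / 2 ^ k) → dist a b ≤ 1 / 2 ^ k := by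
    intro i a b ha hb
    refine (Real.dist_le_of_mem_Icc ha hb).trans (le_of_eq ?_)
    ring
  rw [Prod.dist_eq]
  exact max_le (h i _ _ hp.1 hp'.1) (h j _ _ hp.2 hp'.2)

lemma piece_sub {P M} (hP : Par P M) (k : ℕ) (Q : Fin 6 × Fin (2 ^ k) × Fin (2 ^ k)) (x : E3)
    (hx : x ∈ P Q.1 '' dyadicSq k Q.2.1 Q.2.2) :
    x ∈ Metric.sphere (0 : E3) 1 ∧ dist x (ctr P k Q) ≤ M / 2 ^ k := by
  obtain ⟨p, hp, rfl⟩ := hx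
  have hM := hP.hM
  refine ⟨?_, ?_⟩
  · rw [← hP.onto]; exact Set.mem_iUnion.2 ⟨Q.1, p, dyadicSq_sub k _ _ hp, rfl⟩
  · refine (hP.lip Q.1 p (dyadicSq_sub k _ _ hp) _
      (dyadicSq_sub k _ _ (corner_mem k Q.2.1 Q.2.2))).trans ?_
    have := dyadicSq_dist k _ _ p _ hp (corner_mem k Q.2.1 Q.2.2)
    calc _ ≤ M * (1 / 2 ^ k) := by gcongr
      _ = _ := by ring

lemma ctr_mem {P M} (hP : Par P M) (k : ℕ) (Q : Fin 6 × Fin (2 ^ k) × Fin (2 ^ k)) :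
    ctr P k Q ∈ Metric.sphere (0 : E3) 1 :=
  (piece_sub hP k Q _ ⟨_, corner_mem k Q.2.1 Q.2.2, rfl⟩).1

lemma near_idx {P M} (hP : Par P M) (k : ℕ) (f : Fin 6) (i j i' j' : Fin (2 ^ k)) (y : E3)
    (h : dist y (ctr P k (f, i, j)) ≤ 4 * (M / 2 ^ k))
    (h' : dist y (ctr P k (f, i', j')) ≤ 4 * (M / 2 ^ k)) :
    |((i : ℕ) : ℝ) - ((i' : ℕ) : ℝ)| ≤ 8 * M ^ 2 ∧
    |((j : ℕ) : ℝ) - ((j' : ℕ) : ℝ)| ≤ 8 * M ^ 2 := by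
  have hM := hP.hM
  have h1 := hP.anti f _ (dyadicSq_sub k _ _ (corner_mem k i j)) _
    (dyadicSq_sub k _ _ (corner_mem k i' j'))
  have h2 := dist_triangle_left (ctr P k (f, i, j)) (ctr P k (f, i', j')) y
  have h3 : dist (ctr P k (f, i, j)) (ctr P k (f, i', j')) ≤ 8 * (M / 2 ^ k) := by linarith
  have h4 := h1.trans (mul_le_mul_of_nonneg_left h3 (by linarith))
  have h2k : (0:ℝ) < 2 ^ k := by positivity
  have key : ∀ a b : ℝ, dist (a / 2 ^ k) (b / 2 ^ k) ≤ M * (8 * (M / 2 ^ k)) →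
      |a - b| ≤ 8 * M ^ 2 := by
    intro a b hab
    rw [Real.dist_eq, ← sub_div, abs_div, abs_of_pos h2k, div_le_iff₀ h2k] at hab
    refine hab.trans (le_of_eq ?_)
    field_simp
  rw [Prod.dist_eq] at h4
  exact ⟨key _ _ ((le_max_left _ _).trans h4), key _ _ ((le_max_right _ _).trans h4)⟩

lemma overlap {P M} (hP : Par P M) : ∃ N : ℕ, ∀ (k : ℕ) (y : E3),
    (Finset.univ.filter fun Q : Fin 6 × Fin (2 ^ k) × Fin (2 ^ k) =>
      dist y (ctr P k Q) ≤ 4 * (M / 2 ^ k)).card ≤ N := by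
  set L := ⌈8 * M ^ 2⌉₊ with hL
  refine ⟨6 * (2 * L + 1) ^ 2, fun k y => ?_⟩
  classical
  rw [Finset.card_eq_sum_card_fiberwise (f := Prod.fst) (t := Finset.univ) (by simp)]
  have hfib : ∀ f ∈ (Finset.univ : Finset (Fin 6)), (Finset.filter (fun Q => Q.1 = f)
    (Finset.univ.filter fun Q : Fin 6 × Fin (2 ^ k) × Fin (2 ^ k) =>
      dist y (ctr P k Q) ≤ 4 * (M / 2 ^ k))).card ≤ (2 * L + 1) ^ 2 := by
    intro f _
    rcases Finset.eq_empty_or_nonempty (Finset.filter (fun Q => Q.1 = f)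
      (Finset.univ.filter fun Q : Fin 6 × Fin (2 ^ k) × Fin (2 ^ k) =>
      dist y (ctr P k Q) ≤ 4 * (M / 2 ^ k))) with h | ⟨⟨f0, i0, j0⟩, h0⟩
    · rw [h]; simp
    · simp only [Finset.mem_filter, Finset.mem_univ, true_and] at h0
      obtain ⟨h0, rfl⟩ := h0
      have hc : ∀ i0 : ℕ, (Finset.Icc (i0 - L) (i0 + L)).card ≤ 2 * L + 1 := by
        intro i0; rw [Nat.card_Icc]; omega
      calc _ ≤ (Finset.Icc ((i0:ℕ) - L) (i0 + L) ×ˢ Finset.Icc ((j0:ℕ) - L) (j0 + L)).card := by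
            refine Finset.card_le_card_of_injOn
              (fun Q => ((Q.2.1 : ℕ), (Q.2.2 : ℕ))) ?_ ?_
            · rintro ⟨f, i, j⟩ hQ
              simp only [Finset.coe_filter, Finset.mem_filter, Finset.mem_univ, true_and,
                Set.mem_ofPred_eq] at hQ
              obtain ⟨hQ, rfl⟩ := hQ
              obtain ⟨h1, h2⟩ := near_idx hP k f i j i0 j0 y hQ h0
              have hn : ∀ a b : ℕ, |(a:ℝ) - b| ≤ 8 * M ^ 2 → a ∈ Finset.Icc (b - L) (b + L) := by
                intro a b hab
                have h3 := hab.trans (Nat.le_ceil (8 * M ^ 2))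
                rw [← hL, abs_le] at h3
                have h4 : (a:ℝ) ≤ ((b + L : ℕ) : ℝ) := by push_cast; linarith
                have h5 : (b:ℝ) ≤ ((a + L : ℕ) : ℝ) := by push_cast; linarith
                have h4' : a ≤ b + L := by exact_mod_cast h4
                have h5' : b ≤ a + L := by exact_mod_cast h5
                rw [Finset.mem_Icc]; omega
              rw [Finset.mem_coe, Finset.mem_product]
              exact ⟨hn _ _ h1, hn _ _ h2⟩
            · rintro ⟨f, i, j⟩ hQ ⟨f', i', j'⟩ hQ' he
              simp only [Finset.coe_filter, Finset.mem_filter, Finset.mem_univ, true_and,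
                Set.mem_ofPred_eq] at hQ hQ'
              simp only [Prod.mk.injEq, Fin.val_inj] at he
              simp only [hQ.2, hQ'.2, he.1, he.2]
        _ ≤ (2 * L + 1) ^ 2 := by
            rw [Finset.card_product, sq]
            exact Nat.mul_le_mul (hc _) (hc _)
  refine (Finset.sum_le_sum hfib).trans ?_
  simp

lemma overlap_int {P M} (hP : Par P M) : ∃ N : ℕ, ∀ (k : ℕ) (g : E3 → ℝ≥0∞), Measurable g →
    ∑ Q : Fin 6 × Fin (2 ^ k) × Fin (2 ^ k),
      ∫⁻ y in Metric.closedBall (ctr P k Q) (4 * (M / 2 ^ k)), g y ∂sph ≤ N * ∫⁻ y, g y ∂sph := by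
  obtain ⟨N, hN⟩ := overlap hP
  refine ⟨N, fun k g hg => ?_⟩
  simp_rw [← lintegral_indicator (measurableSet_closedBall)]
  rw [← lintegral_finsetSum _ fun Q _ => hg.indicator measurableSet_closedBall,
    ← lintegral_const_mul _ hg]
  refine lintegral_mono fun y => ?_
  simp only [Set.indicator, Metric.mem_closedBall]
  rw [← Finset.sum_filter, Finset.sum_const, nsmul_eq_mul]
  gcongr
  exact hN k y

lemma diam_pow (s : Set E3) {q : ℝ} (hq : 0 < q) (X : ℝ≥0∞)
    (h : ∀ a ∈ s, ∀ b ∈ s, ENNReal.ofReal (dist a b ^ q) ≤ X) :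
    ENNReal.ofReal (Metric.diam s ^ q) ≤ X := by
  by_cases hX : X = ⊤
  · rw [hX]; exact le_top
  have h1 : Metric.diam s ≤ X.toReal ^ (1 / q) := by
    apply Metric.diam_le_of_forall_dist_le (by positivity)
    intro a ha b hb
    rw [one_div, Real.le_rpow_inv_iff_of_pos dist_nonneg ENNReal.toReal_nonneg hq]
    exact (ENNReal.ofReal_le_iff_le_toReal hX).1 (h a ha b hb)
  rw [ENNReal.ofReal_le_iff_le_toReal hX]
  calc Metric.diam s ^ q ≤ (X.toReal ^ (1 / q)) ^ q := by gcongr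
    _ = X.toReal := by
      rw [← Real.rpow_mul (by positivity), one_div_mul_cancel hq.ne', Real.rpow_one]

/-- scale energies -/
def gg (φ : E3 → E3) (q M : ℝ) (m : ℕ) : ℝ≥0∞ :=
  ENNReal.ofReal (((2:ℝ) ^ (q + 1)) ^ m) * ∫⁻ y, hh φ q (8 * (M / 2 ^ m)) y ∂sph

lemma weight_eq {q M η β : ℝ} (hM : 0 < M) (hη : 0 < η) (hβ : η ^ q = β)
    (h8 : 8 = (2:ℝ) ^ (q + 1) * β ^ 2) (k j : ℕ) :
    (2:ℝ) ^ ((k:ℝ) * (q - 3)) * (2 * ((η ^ j) ^ q)⁻¹ * (2 ^ j)⁻¹ * ((M / 2 ^ k / 2 ^ j) ^ 4)⁻¹) =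
      2 * (M ^ 4)⁻¹ * (β ^ j * ((2:ℝ) ^ (q + 1)) ^ (k + j)) := by
  have hβ0 : 0 < β := hβ ▸ Real.rpow_pos_of_pos hη q
  have h1 : (η ^ j) ^ q = β ^ j := by
    rw [← hβ, ← Real.rpow_natCast, ← Real.rpow_mul hη.le, mul_comm, Real.rpow_mul hη.le,
      Real.rpow_natCast]
  have h2 : (2:ℝ) ^ ((k:ℝ) * (q - 3)) = ((2:ℝ) ^ (q + 1)) ^ k / (16:ℝ) ^ k := by
    rw [← div_pow, mul_comm, Real.rpow_mul (by norm_num), Real.rpow_natCast]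
    congr 1
    rw [show q - 3 = (q + 1) - 4 by ring, Real.rpow_sub (by norm_num)]
    norm_num
  have h3 : (2:ℝ) ^ (q + 1) = 8 / β ^ 2 := by rw [h8]; field_simp
  rw [h1, h2, h3]
  have e16 : (16:ℝ) = 2 ^ 4 := by norm_num
  have e8 : (8:ℝ) = 2 ^ 3 := by norm_num
  rw [e16, e8]
  simp only [div_pow, ← pow_mul, pow_add, mul_pow, div_div]
  field_simp
  ring

lemma osc_sum {P M} (hP : Par P M) {φ : E3 → E3} (hφ : Continuous φ)
    (hbij : Set.BijOn φ (Metric.sphere (0 : E3) 1) (Metric.sphere (0 : E3) 1))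
    {q : ℝ} (hq : 0 < q) {η β : ℝ} (hη : 0 < η) (hη1 : η < 1) (hβ : η ^ q = β)
    (h8 : 8 = (2:ℝ) ^ (q + 1) * β ^ 2) :
    ∃ C : ℝ≥0∞, C ≠ ⊤ ∧ ∀ k : ℕ, M / 2 ^ k ≤ 1 / 4 →
      (∀ x ∈ Metric.sphere (0 : E3) 1, ∀ y ∈ Metric.sphere (0 : E3) 1,
        dist x y ≤ 4 * (M / 2 ^ k) → dist (φ x) (φ y) ≤ 1 / 2) →
      ∑ Q : Fin 6 × Fin (2 ^ k) × Fin (2 ^ k),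
        ENNReal.ofReal ((2 : ℝ) ^ ((k : ℝ) * (q - 3)) *
          Metric.diam (φ '' (P Q.1 '' dyadicSq k Q.2.1 Q.2.2)) ^ q) ≤
      C * ∑' j : ℕ, ENNReal.ofReal (β ^ j) * gg φ q M (k + j) := by
  have hfin := sph_finite hP
  have hM := hP.hM
  have hM0 : 0 < M := by linarith
  have hβ0 : 0 < β := hβ ▸ Real.rpow_pos_of_pos hη q
  obtain ⟨C, hC, hosc⟩ := main_osc hP hφ hbij hq hη hη1
  obtain ⟨N, hN⟩ := overlap_int hP
  refine ⟨ENNReal.ofReal C * N * ENNReal.ofReal (2 * (M ^ 4)⁻¹), by finiteness, ?_⟩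
  intro k hk hcont
  set r := M / 2 ^ k with hr
  have hr0 : 0 < r := by positivity
  have h1 : ∀ Q : Fin 6 × Fin (2 ^ k) × Fin (2 ^ k),
      ENNReal.ofReal (Metric.diam (φ '' (P Q.1 '' dyadicSq k Q.2.1 Q.2.2)) ^ q) ≤
        ENNReal.ofReal C * EE φ q η (ctr P k Q) r := by
    intro Q
    apply diam_pow _ hq
    rintro _ ⟨x, hx, rfl⟩ _ ⟨y, hy, rfl⟩
    obtain ⟨hx1, hx2⟩ := piece_sub hP k Q x hx
    obtain ⟨hy1, hy2⟩ := piece_sub hP k Q y hy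
    refine hosc _ (ctr_mem hP k Q) r hr0 hk ?_ x hx1 y hy1 hx2 hy2
    intro x hx y hy hx2 hy2
    refine hcont x hx y hy ?_
    have := dist_triangle_right x y (ctr P k Q)
    linarith
  calc _ ≤ ∑ Q : Fin 6 × Fin (2 ^ k) × Fin (2 ^ k), ENNReal.ofReal ((2 : ℝ) ^ ((k : ℝ) * (q - 3))) *
        (ENNReal.ofReal C * EE φ q η (ctr P k Q) r) := by
        refine Finset.sum_le_sum fun Q _ => ?_
        rw [ENNReal.ofReal_mul (by positivity)]
        exact mul_le_mul_right (h1 Q) _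
    _ = ENNReal.ofReal C * (ENNReal.ofReal ((2 : ℝ) ^ ((k : ℝ) * (q - 3))) *
        ∑ Q : Fin 6 × Fin (2 ^ k) × Fin (2 ^ k), EE φ q η (ctr P k Q) r) := by
        rw [Finset.mul_sum, Finset.mul_sum]
        exact Finset.sum_congr rfl fun Q _ => by ring
    _ = ENNReal.ofReal C * (ENNReal.ofReal ((2 : ℝ) ^ ((k : ℝ) * (q - 3))) *
        ∑' j : ℕ, ENNReal.ofReal (2 * ((η ^ j) ^ q)⁻¹ * (2 ^ j)⁻¹ * ((r / 2 ^ j) ^ 4)⁻¹) *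
        ∑ Q : Fin 6 × Fin (2 ^ k) × Fin (2 ^ k),
        ∫⁻ y in Metric.closedBall (ctr P k Q) (4 * r), hh φ q (8 * (r / 2 ^ j)) y ∂sph) := by
        congr 2
        simp only [EE]
        rw [← Summable.tsum_finsetSum fun _ _ => ENNReal.summable]
        simp_rw [Finset.mul_sum]
    _ ≤ ENNReal.ofReal C * (ENNReal.ofReal ((2 : ℝ) ^ ((k : ℝ) * (q - 3))) *
        ∑' j : ℕ, ENNReal.ofReal (2 * ((η ^ j) ^ q)⁻¹ * (2 ^ j)⁻¹ * ((r / 2 ^ j) ^ 4)⁻¹) *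
        (N * ∫⁻ y, hh φ q (8 * (r / 2 ^ j)) y ∂sph)) := by
        refine mul_le_mul_right (mul_le_mul_right (ENNReal.tsum_le_tsum fun j => ?_) _) _
        exact mul_le_mul_right (hN k _ (hh_meas hφ hq _)) _
    _ = _ := by
        rw [mul_assoc, mul_assoc]
        congr 1
        rw [← ENNReal.tsum_mul_left, ← ENNReal.tsum_mul_left, ← ENNReal.tsum_mul_left]
        refine tsum_congr fun j => ?_
        have hw := weight_eq hM0 hη hβ h8 k j
        rw [← hr] at hw
        rw [← mul_assoc, ← ENNReal.ofReal_mul (by positivity), hw,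
          ENNReal.ofReal_mul (p := 2 * (M ^ 4)⁻¹) (by positivity),
          ENNReal.ofReal_mul (p := β ^ j) (by positivity), gg, hr, div_div, ← pow_add]
        ring

lemma conv_sum (β : ℝ) (hβ0 : 0 < β) (hβ1 : β < 1) (g : ℕ → ℝ≥0∞) (hg : ∑' m, g m < ⊤) :
    ∑' k : ℕ, ∑' j : ℕ, ENNReal.ofReal (β ^ j) * g (k + j) < ⊤ := by
  rw [ENNReal.tsum_comm]
  have h1 : ∀ j : ℕ, ∑' k : ℕ, ENNReal.ofReal (β ^ j) * g (k + j) ≤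
      ENNReal.ofReal (β ^ j) * ∑' m, g m := by
    intro j
    rw [ENNReal.tsum_mul_left]
    refine mul_le_mul_right ?_ _
    exact ENNReal.tsum_comp_le_tsum_of_injective (add_left_injective j) g
  refine (ENNReal.tsum_le_tsum h1).trans_lt ?_
  rw [ENNReal.tsum_mul_right]
  refine ENNReal.mul_lt_top ?_ hg
  rw [← ENNReal.ofReal_tsum_of_nonneg (fun _ => by positivity)
    (summable_geometric_of_lt_one hβ0.le hβ1)]
  exact ENNReal.ofReal_lt_top

lemma forward {P M} (hP : Par P M) {φ : E3 → E3} (hφ : Continuous φ)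
    (hbij : Set.BijOn φ (Metric.sphere (0 : E3) 1) (Metric.sphere (0 : E3) 1))
    {q : ℝ} (hq : 2 < q) (hI : II φ q < ⊤) :
    ∑' k : ℕ, ∑ Q : Fin 6 × Fin (2 ^ (k + 1)) × Fin (2 ^ (k + 1)),
        ENNReal.ofReal ((2 : ℝ) ^ (((k : ℝ) + 1) * (q - 3)) *
          Metric.diam (φ '' (P Q.1 '' dyadicSq (k + 1) Q.2.1 Q.2.2)) ^ q) < ⊤ := by
  have hfin := sph_finite hP
  have hM := hP.hM
  have hM0 : 0 < M := by linarith
  have hq0 : 0 < q := by linarith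
  set β : ℝ := 2 ^ (-(q - 2) / 2) with hβ
  set η : ℝ := β ^ (1 / q) with hη
  have hβ0 : 0 < β := by positivity
  have hβ1 : β < 1 := Real.rpow_lt_one_of_one_lt_of_neg (by norm_num) (by linarith)
  have hη0 : 0 < η := by positivity
  have hη1 : η < 1 := Real.rpow_lt_one hβ0.le hβ1 (by positivity)
  have hηβ : η ^ q = β := by
    rw [hη, ← Real.rpow_mul hβ0.le, one_div_mul_cancel hq0.ne', Real.rpow_one]
  have h8 : 8 = (2:ℝ) ^ (q + 1) * β ^ 2 := by
    rw [hβ, ← Real.rpow_natCast, ← Real.rpow_mul (by norm_num), ← Real.rpow_add (by norm_num)]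
    rw [show q + 1 + -(q - 2) / 2 * ((2:ℕ):ℝ) = ((3:ℕ):ℝ) by push_cast; ring, Real.rpow_natCast]
    norm_num
  obtain ⟨C, hC, hsum⟩ := osc_sum hP hφ hbij hq0 hη0 hη1 hηβ h8
  obtain ⟨C', hC', hg⟩ := sum_g hφ hq0 hM
  have hgfin : ∑' m, gg φ q M m < ⊤ := by
    refine lt_of_le_of_lt hg ?_
    exact ENNReal.mul_lt_top ENNReal.ofReal_lt_top hI
  have hconv := conv_sum β hβ0 hβ1 _ hgfin
  have huc : UniformContinuousOn φ (Metric.sphere (0 : E3) 1) :=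
    (isCompact_sphere 0 1).uniformContinuousOn_of_continuous hφ.continuousOn
  rw [Metric.uniformContinuousOn_iff] at huc
  obtain ⟨δ, hδ, huc⟩ := huc (1/2) (by norm_num)
  obtain ⟨k0, hk0⟩ := exists_pow_lt_of_lt_one (y := (1/2:ℝ)) (x := min (1/4) (δ/4) / M)
    (by positivity) (by norm_num)
  have hk : ∀ k, k0 ≤ k → M / 2 ^ k < min (1/4) (δ/4) := by
    intro k hk
    have h1 : (1/2:ℝ) ^ k ≤ (1/2) ^ k0 := pow_le_pow_of_le_one (by norm_num) (by norm_num) hk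
    rw [lt_div_iff₀ hM0] at hk0
    calc M / 2 ^ k = (1/2) ^ k * M := by rw [one_div, inv_pow]; ring
      _ ≤ (1/2) ^ k0 * M := by gcongr
      _ < _ := hk0
  set F : ℕ → ℝ≥0∞ := fun k => ∑ Q : Fin 6 × Fin (2 ^ k) × Fin (2 ^ k),
        ENNReal.ofReal ((2 : ℝ) ^ ((k : ℝ) * (q - 3)) *
          Metric.diam (φ '' (P Q.1 '' dyadicSq k Q.2.1 Q.2.2)) ^ q) with hF
  have hFk : ∀ k, k0 ≤ k → F k ≤ C * ∑' j : ℕ, ENNReal.ofReal (β ^ j) * gg φ q M (k + j) := by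
    intro k hkk
    have h2 := hk k hkk
    refine hsum k (h2.le.trans (min_le_left _ _)) ?_
    intro x hx y hy hxy
    refine (huc x hx y hy (hxy.trans_lt ?_)).le
    have := h2.trans_le (min_le_right _ _)
    linarith
  have hFfin : ∀ k, F k < ⊤ := by
    intro k
    exact ENNReal.sum_lt_top.2 fun Q _ => ENNReal.ofReal_lt_top
  have hFs : ∑' k, F k < ⊤ := by
    rw [← ENNReal.summable.sum_add_tsum_nat_add' (k := k0) (f := F)]
    refine ENNReal.add_lt_top.2 ⟨ENNReal.sum_lt_top.2 fun k _ => hFfin k, ?_⟩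
    refine (ENNReal.tsum_le_tsum fun k => hFk (k + k0) (Nat.le_add_left _ _)).trans_lt ?_
    rw [ENNReal.tsum_mul_left]
    refine ENNReal.mul_lt_top hC.lt_top (lt_of_le_of_lt ?_ hconv)
    exact ENNReal.tsum_comp_le_tsum_of_injective (add_left_injective k0)
      (fun k => ∑' j : ℕ, ENNReal.ofReal (β ^ j) * gg φ q M (k + j))
  refine lt_of_le_of_lt ?_ hFs
  refine le_trans (le_of_eq ?_) (ENNReal.tsum_comp_le_tsum_of_injective (add_left_injective 1) F)
  refine tsum_congr fun k => ?_
  simp only [hF]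
  push_cast
  rfl

lemma idx_one (k : ℕ) (a : ℝ) (ha : a ∈ Set.Icc (0:ℝ) 1) : ∃ i : ℕ, i < 2 ^ k ∧
    a ∈ Set.Icc ((i : ℝ) / 2 ^ k) (((i : ℝ) + 1) / 2 ^ k) := by
  have h2 : (0:ℝ) < 2 ^ k := by positivity
  obtain ⟨h0, h1⟩ := ha
  rcases h1.lt_or_eq with h1 | h1
  · refine ⟨⌊a * 2 ^ k⌋₊, ?_, ?_, ?_⟩
    · rw [Nat.floor_lt (by positivity)]
      push_cast
      nlinarith
    · rw [div_le_iff₀ h2]; exact Nat.floor_le (by positivity)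
    · rw [le_div_iff₀ h2]; exact (Nat.lt_floor_add_one _).le
  · have h3 : 1 ≤ 2 ^ k := Nat.one_le_two_pow
    refine ⟨2 ^ k - 1, by omega, ?_, ?_⟩
    · rw [div_le_iff₀ h2, h1]; push_cast [h3]; linarith
    · rw [le_div_iff₀ h2, h1]; push_cast [h3]; linarith

lemma idx_two_aux (k : ℕ) (a b : ℝ) (ha : a ∈ Set.Icc (0:ℝ) 1) (hb : b ∈ Set.Icc (0:ℝ) 1)
    (hab : a ≤ b) (h : b - a ≤ 1 / 2 ^ k) : ∃ i i' : ℕ, i < 2 ^ k ∧ i' < 2 ^ k ∧ ∃ c : ℝ,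
    a ∈ Set.Icc ((i : ℝ) / 2 ^ k) (((i : ℝ) + 1) / 2 ^ k) ∧
    c ∈ Set.Icc ((i : ℝ) / 2 ^ k) (((i : ℝ) + 1) / 2 ^ k) ∧
    c ∈ Set.Icc ((i' : ℝ) / 2 ^ k) (((i' : ℝ) + 1) / 2 ^ k) ∧
    b ∈ Set.Icc ((i' : ℝ) / 2 ^ k) (((i' : ℝ) + 1) / 2 ^ k) := by
  obtain ⟨i, hi, hai⟩ := idx_one k a ha
  have h2 : (0:ℝ) < 2 ^ k := by positivity
  by_cases hbi : b ≤ ((i : ℝ) + 1) / 2 ^ k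
  · exact ⟨i, i, hi, hi, a, hai, hai, hai, hai.1.trans hab, hbi⟩
  · push Not at hbi
    have h3 : (i:ℝ) + 1 < 2 ^ k := by
      rw [div_lt_iff₀ h2] at hbi
      nlinarith [hb.2]
    refine ⟨i, i + 1, hi, by exact_mod_cast h3, ((i : ℝ) + 1) / 2 ^ k, hai, ⟨by gcongr; linarith, le_rfl⟩,
      ?_, ?_⟩
    · push_cast
      exact ⟨le_rfl, by gcongr; linarith⟩
    · push_cast
      refine ⟨hbi.le, ?_⟩
      have := hai.2
      rw [add_div]
      linarith

lemma idx_two (k : ℕ) (a b : ℝ) (ha : a ∈ Set.Icc (0:ℝ) 1) (hb : b ∈ Set.Icc (0:ℝ) 1)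
    (h : dist a b ≤ 1 / 2 ^ k) : ∃ i i' : ℕ, i < 2 ^ k ∧ i' < 2 ^ k ∧ ∃ c : ℝ,
    a ∈ Set.Icc ((i : ℝ) / 2 ^ k) (((i : ℝ) + 1) / 2 ^ k) ∧
    c ∈ Set.Icc ((i : ℝ) / 2 ^ k) (((i : ℝ) + 1) / 2 ^ k) ∧
    c ∈ Set.Icc ((i' : ℝ) / 2 ^ k) (((i' : ℝ) + 1) / 2 ^ k) ∧
    b ∈ Set.Icc ((i' : ℝ) / 2 ^ k) (((i' : ℝ) + 1) / 2 ^ k) := by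
  rw [Real.dist_eq, abs_le] at h
  rcases le_total a b with hab | hab
  · exact idx_two_aux k a b ha hb hab (by linarith)
  · obtain ⟨i, i', hi, hi', c, h1, h2, h3, h4⟩ := idx_two_aux k b a hb ha hab (by linarith)
    exact ⟨i', i, hi', hi, c, h4, h3, h2, h1⟩

/-- a dyadic piece of the sphere -/
def pc (P : Fin 6 → ℝ × ℝ → E3) (k : ℕ) (Q : Fin 6 × Fin (2 ^ k) × Fin (2 ^ k)) : Set E3 :=
  P Q.1 '' dyadicSq k Q.2.1 Q.2.2

lemma face_link (P : Fin 6 → ℝ × ℝ → E3) (k : ℕ) (f : Fin 6) (p p' : ℝ × ℝ) (hp : p ∈ Isq)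
    (hp' : p' ∈ Isq) (h : dist p p' ≤ 1 / 2 ^ k) :
    ∃ Q Q' : Fin 6 × Fin (2 ^ k) × Fin (2 ^ k), ∃ z : E3, P f p ∈ pc P k Q ∧ z ∈ pc P k Q ∧
      z ∈ pc P k Q' ∧ P f p' ∈ pc P k Q' := by
  rw [Prod.dist_eq] at h
  obtain ⟨i, i', hi, hi', c, h1, h2, h3, h4⟩ := idx_two k _ _ hp.1 hp'.1 ((le_max_left _ _).trans h)
  obtain ⟨j, j', hj, hj', e, g1, g2, g3, g4⟩ := idx_two k _ _ hp.2 hp'.2 ((le_max_right _ _).trans h)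
  exact ⟨(f, ⟨i, hi⟩, ⟨j, hj⟩), (f, ⟨i', hi'⟩, ⟨j', hj'⟩), P f (c, e), ⟨p, ⟨h1, g1⟩, rfl⟩,
    ⟨(c, e), ⟨h2, g2⟩, rfl⟩, ⟨(c, e), ⟨h3, g3⟩, rfl⟩, ⟨p', ⟨h4, g4⟩, rfl⟩⟩

lemma near_link {P M} (hP : Par P M) {φ : E3 → E3}
    (hmap : Set.MapsTo φ (Metric.sphere (0 : E3) 1) (Metric.sphere (0 : E3) 1))
    (k : ℕ) (hk : 1 ≤ k) (x y : E3) (hx : x ∈ Metric.sphere (0 : E3) 1)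
    (hy : y ∈ Metric.sphere (0 : E3) 1) (h : M * dist x y ≤ 1 / 2 ^ k) :
    ∃ Q : Fin 6 × Fin (2 ^ k) × Fin (2 ^ k), dist (φ x) (φ y) ≤ 4 * Metric.diam (φ '' pc P k Q) ∧
      dist x (ctr P k Q) ≤ 8 * (M / 2 ^ k) ∧ dist y (ctr P k Q) ≤ 8 * (M / 2 ^ k) := by
  rw [← hP.onto] at hx hy
  obtain ⟨f, p, hp, rfl⟩ := Set.mem_iUnion.1 hx
  obtain ⟨g, p', hp', rfl⟩ := Set.mem_iUnion.1 hy
  have hlt : (1:ℝ) / 2 ^ k < 1 := by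
    rw [div_lt_one (by positivity)]
    exact one_lt_pow₀ (by norm_num) (by omega)
  obtain ⟨s, hs, s', hs', hss, h1, h2⟩ := hP.link f g p hp p' hp' (h.trans_lt hlt)
  obtain ⟨Q1, Q2, z, a1, a2, a3, a4⟩ := face_link P k f p s hp hs (h1.trans h)
  obtain ⟨Q3, Q4, w, b1, b2, b3, b4⟩ := face_link P k g s' p' hs' hp' (h2.trans h)
  rw [← hss] at b1
  have hM := hP.hM
  have hr : 0 < M / 2 ^ k := by positivity
  have hd : ∀ Q, ∀ u ∈ pc P k Q, ∀ v ∈ pc P k Q,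
      dist (φ u) (φ v) ≤ Metric.diam (φ '' pc P k Q) := by
    intro Q u hu v hv
    apply Metric.dist_le_diam_of_mem _ (Set.mem_image_of_mem _ hu) (Set.mem_image_of_mem _ hv)
    refine (Metric.isBounded_sphere (x := (0 : E3)) (r := 1)).subset ?_
    rintro _ ⟨t, ht, rfl⟩
    exact hmap (piece_sub hP k Q t ht).1
  have hc : ∀ Q, ∀ u ∈ pc P k Q, dist u (ctr P k Q) ≤ M / 2 ^ k := fun Q u hu =>
    (piece_sub hP k Q u hu).2
  have d1 := hd _ _ a1 _ a2
  have d2 := hd _ _ a3 _ a4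
  have d3 := hd _ _ b1 _ b2
  have d4 := hd _ _ b3 _ b4
  have e1 := hc _ _ a1
  have e2 := hc _ _ a2
  have e3 := hc _ _ a3
  have e4 := hc _ _ a4
  have e5 := hc _ _ b1
  have e6 := hc _ _ b2
  have e7 := hc _ _ b3
  have e8 := hc _ _ b4
  have t1 := dist_triangle4 (φ (P f p)) (φ z) (φ (P f s)) (φ w)
  have t2 := dist_triangle (φ (P f p)) (φ w) (φ (P g p'))
  have u1 := dist_triangle_right (P f p) z (ctr P k Q1)
  have u2 := dist_triangle_right z (P f s) (ctr P k Q2)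
  have u3 := dist_triangle_right (P f s) w (ctr P k Q3)
  have u4 := dist_triangle_right w (P g p') (ctr P k Q4)
  have c1 := dist_comm z (P f p)
  have c2 := dist_comm (P f s) z
  have c3 := dist_comm w (P f s)
  have c4 := dist_comm (P g p') w
  have v1 := dist_triangle4 (P g p') w (P f s) (ctr P k Q2)
  have v2 := dist_triangle4 (P g p') w (P f s) z
  have v3 := dist_triangle (P g p') z (ctr P k Q1)
  have v4 := dist_triangle (P g p') w (ctr P k Q3)
  have w1 := dist_triangle4 (P f p) z (P f s) (ctr P k Q3)
  have w2 := dist_triangle4 (P f p) z (P f s) w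
  have w3 := dist_triangle (P f p) w (ctr P k Q4)
  have w4 := dist_triangle (P f p) z (ctr P k Q2)
  by_contra hno
  push Not at hno
  have n1 : ¬ dist (φ (P f p)) (φ (P g p')) ≤ 4 * Metric.diam (φ '' pc P k Q1) := fun hh => by
    have := hno Q1 hh (by linarith); linarith
  have n2 : ¬ dist (φ (P f p)) (φ (P g p')) ≤ 4 * Metric.diam (φ '' pc P k Q2) := fun hh => by
    have := hno Q2 hh (by linarith); linarith
  have n3 : ¬ dist (φ (P f p)) (φ (P g p')) ≤ 4 * Metric.diam (φ '' pc P k Q3) := fun hh => by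
    have := hno Q3 hh (by linarith); linarith
  have n4 : ¬ dist (φ (P f p)) (φ (P g p')) ≤ 4 * Metric.diam (φ '' pc P k Q4) := fun hh => by
    have := hno Q4 hh (by linarith); linarith
  push Not at n1 n2 n3 n4
  linarith

/-- the term of generation k in the pointwise bound of the kernel -/
def kern (P : Fin 6 → ℝ × ℝ → E3) (M : ℝ) (φ : E3 → E3) (q : ℝ) (k : ℕ) (x y : E3) : ℝ≥0∞ :=
  ∑ Q : Fin 6 × Fin (2 ^ k) × Fin (2 ^ k),
    ENNReal.ofReal ((4 * Metric.diam (φ '' pc P k Q)) ^ q * (M * 2 ^ (k + 1)) ^ (q + 1)) *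
      ((Metric.closedBall (ctr P k Q) (8 * (M / 2 ^ k))).indicator 1 x *
        (Metric.closedBall (ctr P k Q) (8 * (M / 2 ^ k))).indicator 1 y)

lemma kern_bound {P M} (hP : Par P M) {φ : E3 → E3}
    (hmap : Set.MapsTo φ (Metric.sphere (0 : E3) 1) (Metric.sphere (0 : E3) 1))
    {q : ℝ} (hq : 0 < q) (x y : E3) (hx : x ∈ Metric.sphere (0 : E3) 1)
    (hy : y ∈ Metric.sphere (0 : E3) 1) :
    ENNReal.ofReal (dist (φ x) (φ y) ^ q / dist x y ^ (q + 1)) ≤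
      ENNReal.ofReal (2 ^ q * (2 * M) ^ (q + 1)) + ∑' k : ℕ, kern P M φ q (k + 1) x y := by
  have hM := hP.hM
  have hM0 : 0 < M := by linarith
  rcases eq_or_ne x y with rfl | hxy
  · rw [dist_self, Real.zero_rpow hq.ne']; simp
  have hd : 0 < dist x y := dist_pos.2 hxy
  by_cases hfar : 1 / 2 < M * dist x y
  · refine le_add_right (ENNReal.ofReal_le_ofReal ?_)
    have h1 : dist (φ x) (φ y) ≤ 2 := by
      have := dist_triangle_right (φ x) (φ y) 0
      rw [hmap hx, hmap hy] at this
      linarith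
    rw [div_eq_mul_inv, ← Real.inv_rpow dist_nonneg]
    gcongr
    rw [inv_le_iff_one_le_mul₀ hd]
    linarith
  · push Not at hfar
    refine le_add_left ?_
    obtain ⟨n, hn1, hn2⟩ := exists_nat_pow_near_of_lt_one (x := 2 * (M * dist x y)) (y := (1/2:ℝ))
      (by positivity) (by linarith) (by norm_num) (by norm_num)
    have hn3 : M * dist x y ≤ 1 / 2 ^ (n + 1) := by
      rw [one_div_pow] at hn2
      rw [pow_succ, ← div_div]
      linarith
    obtain ⟨Q, hQ1, hQ2, hQ3⟩ := near_link hP hmap (n + 1) (by omega) x y hx hy hn3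
    refine le_trans ?_ (ENNReal.le_tsum n)
    rw [kern]
    refine le_trans ?_ (Finset.single_le_sum (fun _ _ => bot_le) (Finset.mem_univ Q))
    rw [Set.indicator_of_mem (by exact hQ2), Set.indicator_of_mem (by exact hQ3)]
    simp only [Pi.one_apply, mul_one]
    apply ENNReal.ofReal_le_ofReal
    rw [div_eq_mul_inv, ← Real.inv_rpow dist_nonneg]
    gcongr
    rw [inv_le_iff_one_le_mul₀ hd]
    rw [one_div_pow, div_lt_iff₀ (by positivity)] at hn1
    have e : (2:ℝ) ^ (n + 1 + 1) = 2 * 2 ^ (n + 1) := by ring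
    rw [e]
    nlinarith

lemma kern_meas (P : Fin 6 → ℝ × ℝ → E3) (M : ℝ) (φ : E3 → E3) (q : ℝ) (k : ℕ) :
    Measurable fun p : E3 × E3 => kern P M φ q k p.1 p.2 := by
  unfold kern
  refine Finset.measurable_sum _ fun Q _ => ?_
  have h : Measurable ((Metric.closedBall (ctr P k Q) (8 * (M / 2 ^ k))).indicator
    (1 : E3 → ℝ≥0∞)) := measurable_one.indicator measurableSet_closedBall
  exact ((h.comp measurable_fst).mul (h.comp measurable_snd)).const_mul _

lemma kern_meas_right (P : Fin 6 → ℝ × ℝ → E3) (M : ℝ) (φ : E3 → E3) (q : ℝ) (k : ℕ) (x : E3) :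
    Measurable fun y : E3 => kern P M φ q k x y := by
  unfold kern
  refine Finset.measurable_sum _ fun Q _ => ?_
  have h : Measurable ((Metric.closedBall (ctr P k Q) (8 * (M / 2 ^ k))).indicator
    (1 : E3 → ℝ≥0∞)) := measurable_one.indicator measurableSet_closedBall
  exact (h.const_mul _).const_mul _

lemma kern_int {P M} (hP : Par P M) (φ : E3 → E3) {q : ℝ} (hq : 0 < q) :
    ∃ C : ℝ, 0 < C ∧ ∀ k : ℕ, ∫⁻ x, ∫⁻ y, kern P M φ q k x y ∂sph ∂sph ≤
      ENNReal.ofReal C * ∑ Q : Fin 6 × Fin (2 ^ k) × Fin (2 ^ k),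
        ENNReal.ofReal ((2 : ℝ) ^ ((k : ℝ) * (q - 3)) * Metric.diam (φ '' pc P k Q) ^ q) := by
  have hM := hP.hM
  have hM0 : 0 < M := by linarith
  obtain ⟨C, hC, hup⟩ := sph_upper hP
  refine ⟨4 ^ q * (2 * M) ^ (q + 1) * (C * (8 * M) ^ 2) ^ 2, by positivity, fun k => ?_⟩
  have hind : ∀ Q : Fin 6 × Fin (2 ^ k) × Fin (2 ^ k),
      Measurable ((Metric.closedBall (ctr P k Q) (8 * (M / 2 ^ k))).indicator
        (1 : E3 → ℝ≥0∞)) := fun Q => measurable_one.indicator measurableSet_closedBall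
  have h1 : ∀ x, ∫⁻ y, kern P M φ q k x y ∂sph = ∑ Q : Fin 6 × Fin (2 ^ k) × Fin (2 ^ k),
    ENNReal.ofReal ((4 * Metric.diam (φ '' pc P k Q)) ^ q * (M * 2 ^ (k + 1)) ^ (q + 1)) *
      ((Metric.closedBall (ctr P k Q) (8 * (M / 2 ^ k))).indicator 1 x *
        sph (Metric.closedBall (ctr P k Q) (8 * (M / 2 ^ k)))) := by
    intro x
    unfold kern
    rw [lintegral_finsetSum _ fun Q _ => ((hind Q).const_mul _).const_mul _]
    refine Finset.sum_congr rfl fun Q _ => ?_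
    rw [lintegral_const_mul _ ((hind Q).const_mul _), lintegral_const_mul _ (hind Q),
      lintegral_indicator_one measurableSet_closedBall]
  simp_rw [h1]
  rw [lintegral_finsetSum _ fun Q _ => ((hind Q).mul_const _).const_mul _, Finset.mul_sum]
  refine Finset.sum_le_sum fun Q _ => ?_
  rw [lintegral_const_mul _ ((hind Q).mul_const _), lintegral_mul_const _ (hind Q),
      lintegral_indicator_one measurableSet_closedBall]
  have h2 := hup (ctr P k Q) (8 * (M / 2 ^ k)) (by positivity)
  refine (mul_le_mul_right (mul_le_mul' h2 h2) _).trans (le_of_eq ?_)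
  rw [← ENNReal.ofReal_mul (by positivity), ← ENNReal.ofReal_mul (by positivity),
    ← ENNReal.ofReal_mul (by positivity)]
  congr 1
  have h3 : (2:ℝ) ^ ((k:ℝ) * (q - 3)) = ((2:ℝ) ^ (q + 1)) ^ k / (16:ℝ) ^ k := by
    rw [← div_pow, mul_comm, Real.rpow_mul (by norm_num), Real.rpow_natCast]
    congr 1
    rw [show q - 3 = (q + 1) - 4 by ring, Real.rpow_sub (by norm_num)]
    norm_num
  have h4 : (M * 2 ^ (k + 1)) ^ (q + 1) = (2 * M) ^ (q + 1) * ((2:ℝ) ^ (q + 1)) ^ k := by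
    rw [← Real.rpow_natCast (_ ^ (q+1)), ← Real.rpow_mul (by norm_num), mul_comm (q + 1),
      Real.rpow_mul (by norm_num), Real.rpow_natCast, ← Real.mul_rpow (by positivity) (by positivity)]
    congr 1
    ring
  rw [h3, h4, Real.mul_rpow (by norm_num) Metric.diam_nonneg, show (16:ℝ) = 2 ^ 4 by norm_num]
  field_simp
  rw [← pow_mul, ← pow_mul, mul_comm 4 k]

lemma backward {P M} (hP : Par P M) {φ : E3 → E3}
    (hmap : Set.MapsTo φ (Metric.sphere (0 : E3) 1) (Metric.sphere (0 : E3) 1))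
    {q : ℝ} (hq : 0 < q)
    (hS : ∑' k : ℕ, ∑ Q : Fin 6 × Fin (2 ^ (k + 1)) × Fin (2 ^ (k + 1)),
        ENNReal.ofReal ((2 : ℝ) ^ (((k : ℝ) + 1) * (q - 3)) *
          Metric.diam (φ '' (P Q.1 '' dyadicSq (k + 1) Q.2.1 Q.2.2)) ^ q) < ⊤) :
    II φ q < ⊤ := by
  have hfin := sph_finite hP
  obtain ⟨C, hC, hkint⟩ := kern_int hP φ hq
  have hS2 : ∀ p : E3 → Prop, (∀ x ∈ Metric.sphere (0 : E3) 1, p x) → ∀ᵐ x ∂sph, p x := by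
    intro p hp
    exact ae_restrict_of_forall_mem Metric.isClosed_sphere.measurableSet hp
  set A := ENNReal.ofReal (2 ^ q * (2 * M) ^ (q + 1)) with hA
  have h1 : II φ q ≤ ∫⁻ x, ∫⁻ y, A + ∑' k : ℕ, kern P M φ q (k + 1) x y ∂sph ∂sph := by
    refine lintegral_mono_ae (hS2 _ fun x hx => lintegral_mono_ae (hS2 _ fun y hy => ?_))
    exact kern_bound hP hmap hq x y hx hy
  refine h1.trans_lt ?_
  have h2 : ∀ x, ∫⁻ y, A + ∑' k : ℕ, kern P M φ q (k + 1) x y ∂sph =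
      A * sph Set.univ + ∑' k : ℕ, ∫⁻ y, kern P M φ q (k + 1) x y ∂sph := by
    intro x
    rw [lintegral_add_left measurable_const, lintegral_const,
      lintegral_tsum fun k => (kern_meas_right P M φ q (k + 1) x).aemeasurable]
  simp_rw [h2]
  rw [lintegral_add_left measurable_const, lintegral_const,
    lintegral_tsum fun k => ((kern_meas P M φ q (k + 1)).lintegral_prod_right'
      (ν := sph)).aemeasurable]
  refine ENNReal.add_lt_top.2 ⟨by finiteness, ?_⟩
  refine (ENNReal.tsum_le_tsum fun k => hkint (k + 1)).trans_lt ?_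
  rw [ENNReal.tsum_mul_left]
  refine ENNReal.mul_lt_top ENNReal.ofReal_lt_top ?_
  simpa only [pc, Nat.cast_add, Nat.cast_one] using hS

/-- Discrete characterization: for a homeomorphism `φ` of the unit sphere `S² ⊂ ℝ³` and `q > 2`,
with the dyadic decomposition `D̃_k` of `S²` induced by a bi-Lipschitz map `Φ` from the cube
boundary, the Gagliardo double integral `∫∫ |φ(x) − φ(y)|^q/|x−y|^{q+1}` (w.r.t. 2-dimensional
Hausdorff measure) is finite iff `∑_{k≥1} 2^{k(q−3)} ∑_{Q̃ ∈ D̃_k} (diam φ(Q̃))^q < ∞`. -/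
theorem stmt_0 (q : ℝ) (hq : 2 < q)
    (Φ : EuclideanSpace ℝ (Fin 3) → EuclideanSpace ℝ (Fin 3)) (K : ℝ≥0)
    (hΦlip : LipschitzOnWith K Φ cubeBoundary)
    (hΦanti : AntilipschitzWith K (cubeBoundary.restrict Φ))
    (hΦonto : Φ '' cubeBoundary = Metric.sphere (0 : EuclideanSpace ℝ (Fin 3)) 1)
    (φ : EuclideanSpace ℝ (Fin 3) → EuclideanSpace ℝ (Fin 3))
    (hφ : Set.BijOn φ (Metric.sphere (0 : EuclideanSpace ℝ (Fin 3)) 1)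
      (Metric.sphere (0 : EuclideanSpace ℝ (Fin 3)) 1))
    (hφc : ContinuousOn φ (Metric.sphere (0 : EuclideanSpace ℝ (Fin 3)) 1)) :
    (∫⁻ x in Metric.sphere (0 : EuclideanSpace ℝ (Fin 3)) 1,
        ∫⁻ y in Metric.sphere (0 : EuclideanSpace ℝ (Fin 3)) 1,
          ENNReal.ofReal (‖φ x - φ y‖ ^ q / ‖x - y‖ ^ (q + 1)) ∂μH[2] ∂μH[2]) < ⊤ ↔
      (∑' k : ℕ, ∑' f : Fin 6, ∑' i : Fin (2 ^ (k + 1)), ∑' j : Fin (2 ^ (k + 1)),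
        ENNReal.ofReal ((2 : ℝ) ^ (((k : ℝ) + 1) * (q - 3)) *
          Metric.diam (φ '' (Φ '' (cubeFace f '' dyadicSq (k + 1) i j))) ^ q)) < ⊤ := by
  have hP := par_of Φ K hΦlip hΦanti hΦonto
  have hcl : IsClosed (Metric.sphere (0 : E3) 1) := Metric.isClosed_sphere
  obtain ⟨ψ, hψ⟩ := ContinuousMap.exists_restrict_eq (Y := E3) hcl
    ⟨(Metric.sphere (0 : E3) 1).restrict φ, hφc.restrict⟩
  have hψφ : Set.EqOn φ ψ (Metric.sphere (0 : E3) 1) := by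
    intro x hx
    have := congrArg (fun F => F ⟨x, hx⟩) hψ
    exact this.symm
  have hψb : Set.BijOn ψ (Metric.sphere (0 : E3) 1) (Metric.sphere (0 : E3) 1) := hφ.congr hψφ
  have e1 : (∫⁻ x in Metric.sphere (0 : EuclideanSpace ℝ (Fin 3)) 1,
        ∫⁻ y in Metric.sphere (0 : EuclideanSpace ℝ (Fin 3)) 1,
          ENNReal.ofReal (‖φ x - φ y‖ ^ q / ‖x - y‖ ^ (q + 1)) ∂μH[2] ∂μH[2]) = II ψ q := by
    rw [II, sph]
    refine setLIntegral_congr_fun hcl.measurableSet fun x hx => ?_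
    refine setLIntegral_congr_fun hcl.measurableSet fun y hy => ?_
    simp only [dist_eq_norm, hψφ hx, hψφ hy]
  have e2 : (∑' k : ℕ, ∑' f : Fin 6, ∑' i : Fin (2 ^ (k + 1)), ∑' j : Fin (2 ^ (k + 1)),
        ENNReal.ofReal ((2 : ℝ) ^ (((k : ℝ) + 1) * (q - 3)) *
          Metric.diam (φ '' (Φ '' (cubeFace f '' dyadicSq (k + 1) i j))) ^ q)) =
      ∑' k : ℕ, ∑ Q : Fin 6 × Fin (2 ^ (k + 1)) × Fin (2 ^ (k + 1)),
        ENNReal.ofReal ((2 : ℝ) ^ (((k : ℝ) + 1) * (q - 3)) *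
          Metric.diam (ψ '' ((fun f p => Φ (cubeFace f p)) Q.1 ''
            dyadicSq (k + 1) Q.2.1 Q.2.2)) ^ q) := by
    refine tsum_congr fun k => ?_
    simp only [tsum_fintype, Fintype.sum_prod_type]
    refine Finset.sum_congr rfl fun f _ => Finset.sum_congr rfl fun i _ =>
      Finset.sum_congr rfl fun j _ => ?_
    have h1 : φ '' (Φ '' (cubeFace f '' dyadicSq (k + 1) i j)) =
        ψ '' ((fun p => Φ (cubeFace f p)) '' dyadicSq (k + 1) i j) := by
      rw [Set.image_image Φ]
      exact Set.image_congr fun x hx => hψφ (piece_sub hP (k + 1) (f, i, j) x hx).1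
    rw [h1]
  rw [e1, e2]
  exact ⟨forward hP ψ.continuous hψb hq, backward hP hψb.mapsTo (by linarith)⟩

end
end

section
/- Let φ : [0,1]² → ℝ² be a homeomorphism, q ∈ (1,∞), and let D̃_k denote the k-th generation dyadic squares of [0,1]². If ∑_{k=1}^∞ 2^{k(q−3)} ∑_{S ∈ D̃_k} (diam φ(S))^q < ∞, then ∫_{[0,1]²}∫_{[0,1]²} |φ(x) − φ(y)|^q / |x − y|^{q+1} dx dy < ∞. -/
open MeasureTheory

lemma aux_index (N : ℕ) (hN : 0 < N) (s : ℝ) (hs : s ∈ Set.Icc (0 : ℝ) 1) :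
    ∃ i : ℕ, i < N ∧ s ∈ Set.Icc ((i : ℝ) / N) (((i : ℝ) + 1) / N) := by
  have hN' : (0 : ℝ) < N := by exact_mod_cast hN
  obtain ⟨h0, h1⟩ := hs
  rcases lt_or_eq_of_le h1 with h | h
  · refine ⟨⌊s * N⌋₊, ?_, ?_, ?_⟩
    · rw [Nat.floor_lt (by positivity)]
      nlinarith
    · rw [div_le_iff₀ hN']
      exact Nat.floor_le (by positivity)
    · rw [le_div_iff₀ hN']
      exact (Nat.lt_floor_add_one _).le
  · subst h
    refine ⟨N - 1, by omega, ?_, ?_⟩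
    · rw [div_le_iff₀ hN', Nat.cast_sub (by omega)]
      push_cast
      linarith
    · rw [le_div_iff₀ hN', Nat.cast_sub (by omega)]
      push_cast
      linarith

lemma aux_adj (N : ℕ) (hN : 0 < N) (i j : ℕ) (h1 : i ≤ j + 1) (h2 : j ≤ i + 1) :
    ∃ u : ℝ, u ∈ Set.Icc ((i : ℝ) / N) (((i : ℝ) + 1) / N) ∧
      u ∈ Set.Icc ((j : ℝ) / N) (((j : ℝ) + 1) / N) := by
  have hN' : (0 : ℝ) < N := by exact_mod_cast hN
  have h1' : (i : ℝ) ≤ j + 1 := by exact_mod_cast h1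
  have h2' : (j : ℝ) ≤ i + 1 := by exact_mod_cast h2
  refine ⟨(max (i : ℝ) j) / N, ⟨?_, ?_⟩, ⟨?_, ?_⟩⟩ <;>
    refine div_le_div_of_nonneg_right ?_ hN'.le <;> simp [h1', h2']

lemma aux_near (N : ℕ) (hN : 0 < N) (s : ℝ) (a i : ℕ)
    (hs : s ∈ Set.Icc ((a : ℝ) / N) (((a : ℝ) + 1) / N)) (h1 : a ≤ i + 3) (h2 : i ≤ a + 3) :
    |s - (i : ℝ) / N| ≤ 4 / N := by
  have hN' : (0 : ℝ) < N := by exact_mod_cast hN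
  obtain ⟨ha, hb⟩ := hs
  rw [div_le_iff₀ hN'] at ha
  rw [le_div_iff₀ hN'] at hb
  have h1' : (a : ℝ) ≤ i + 3 := by exact_mod_cast h1
  have h2' : (i : ℝ) ≤ a + 3 := by exact_mod_cast h2
  have : s - (i : ℝ) / N = (s * N - i) / N := by field_simp
  rw [this, abs_div, abs_of_pos hN']
  refine div_le_div_of_nonneg_right ?_ hN'.le
  rw [abs_le]
  constructor <;> linarith

/-- One-dimensional chain. -/
lemma aux_chain (N : ℕ) (hN : 0 < N) (s t : ℝ) (hs : s ∈ Set.Icc (0 : ℝ) 1)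
    (ht : t ∈ Set.Icc (0 : ℝ) 1) (hst : |s - t| ≤ 2 / N) :
    ∃ (i : Fin 4 → ℕ) (p : Fin 5 → ℝ), p 0 = s ∧ p 4 = t ∧ (∀ m, i m < N) ∧
      (∀ m : Fin 4, p m.castSucc ∈ Set.Icc ((i m : ℝ) / N) (((i m : ℝ) + 1) / N)) ∧
      (∀ m : Fin 4, p m.succ ∈ Set.Icc ((i m : ℝ) / N) (((i m : ℝ) + 1) / N)) ∧
      (∀ m, |s - (i m : ℝ) / N| ≤ 4 / N) ∧ (∀ m, |t - (i m : ℝ) / N| ≤ 4 / N) := by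
  have hN' : (0 : ℝ) < N := by exact_mod_cast hN
  obtain ⟨a, ha, hsa⟩ := aux_index N hN s hs
  obtain ⟨b, hb, htb⟩ := aux_index N hN t ht
  have hab : a ≤ b + 3 ∧ b ≤ a + 3 := by
    obtain ⟨h1, h2⟩ := hsa
    obtain ⟨h3, h4⟩ := htb
    rw [div_le_iff₀ hN'] at h1 h3
    rw [le_div_iff₀ hN'] at h2 h4
    obtain ⟨h5, h6⟩ := abs_le.mp hst
    have e : 2 / (N : ℝ) * N = 2 := by field_simp
    have h7 : s * N - t * N ≤ 2 := by nlinarith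
    have h8 : t * N - s * N ≤ 2 := by nlinarith
    constructor
    · have : (a : ℝ) ≤ b + 3 := by linarith
      exact_mod_cast this
    · have : (b : ℝ) ≤ a + 3 := by linarith
      exact_mod_cast this
  obtain ⟨c, hc⟩ : ∃ c, c = (2 * a + b) / 3 := ⟨_, rfl⟩
  obtain ⟨d, hd⟩ : ∃ d, d = (a + 2 * b) / 3 := ⟨_, rfl⟩
  obtain ⟨u, hu1, hu2⟩ := aux_adj N hN a c (by omega) (by omega)
  obtain ⟨v, hv1, hv2⟩ := aux_adj N hN c d (by omega) (by omega)
  obtain ⟨w, hw1, hw2⟩ := aux_adj N hN d b (by omega) (by omega)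
  refine ⟨![a, c, d, b], ![s, u, v, w, t], rfl, rfl, ?_, ?_, ?_, ?_, ?_⟩
  · intro m; fin_cases m <;> simp <;> omega
  · intro m; fin_cases m
    exacts [hsa, hu2, hv2, hw2]
  · intro m; fin_cases m
    exacts [hu1, hv1, hw1, htb]
  · intro m
    refine aux_near N hN s a _ hsa ?_ ?_ <;> fin_cases m <;> simp <;> omega
  · intro m
    refine aux_near N hN t b _ htb ?_ ?_ <;> fin_cases m <;> simp <;> omega

lemma dyadicSq_subset (k i j : ℕ) (hi : i < 2 ^ k) (hj : j < 2 ^ k) :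
    dyadicSq k i j ⊆ Set.Icc (0 : ℝ) 1 ×ˢ Set.Icc (0 : ℝ) 1 := by
  have key : ∀ i : ℕ, i < 2 ^ k →
      Set.Icc ((i : ℝ) / 2 ^ k) (((i : ℝ) + 1) / 2 ^ k) ⊆ Set.Icc (0 : ℝ) 1 := by
    intro i hi
    apply Set.Icc_subset_Icc
    · positivity
    · rw [div_le_one (by positivity)]
      exact_mod_cast hi
  exact Set.prod_mono (key i hi) (key j hj)

/-- Some dyadic square near `x, y` whose image has large diameter. -/
lemma aux_square (φ : ℝ × ℝ → ℝ × ℝ)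
    (hc : ContinuousOn φ (Set.Icc (0 : ℝ) 1 ×ˢ Set.Icc (0 : ℝ) 1))
    (x y : ℝ × ℝ) (hx : x ∈ Set.Icc (0 : ℝ) 1 ×ˢ Set.Icc (0 : ℝ) 1)
    (hy : y ∈ Set.Icc (0 : ℝ) 1 ×ˢ Set.Icc (0 : ℝ) 1) (k : ℕ)
    (hxy : ‖x - y‖ ≤ 2 / 2 ^ k) :
    ∃ i j : ℕ, i < 2 ^ k ∧ j < 2 ^ k ∧
      ‖φ x - φ y‖ ≤ 4 * Metric.diam (φ '' dyadicSq k i j) ∧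
      x ∈ Metric.closedBall (((i : ℝ) / 2 ^ k, (j : ℝ) / 2 ^ k) : ℝ × ℝ) (4 / 2 ^ k) ∧
      y ∈ Metric.closedBall (((i : ℝ) / 2 ^ k, (j : ℝ) / 2 ^ k) : ℝ × ℝ) (4 / 2 ^ k) := by
  have h1 : |x.1 - y.1| ≤ 2 / ((2 ^ k : ℕ) : ℝ) := by
    push_cast; exact (norm_fst_le (x - y)).trans hxy
  have h2 : |x.2 - y.2| ≤ 2 / ((2 ^ k : ℕ) : ℝ) := by
    push_cast; exact (norm_snd_le (x - y)).trans hxy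
  obtain ⟨i, p, p0, p4, hi, pa, pb, hxi, hyi⟩ := aux_chain (2 ^ k) (by positivity) _ _ hx.1 hy.1 h1
  obtain ⟨j, r, r0, r4, hj, ra, rb, hxj, hyj⟩ := aux_chain (2 ^ k) (by positivity) _ _ hx.2 hy.2 h2
  push_cast at pa pb ra rb hxi hyi hxj hyj
  have hd : ∀ m : Fin 4, dist (φ (p m.castSucc, r m.castSucc)) (φ (p m.succ, r m.succ)) ≤
      Metric.diam (φ '' dyadicSq k (i m) (j m)) := by
    intro m
    apply Metric.dist_le_diam_of_mem
    · have hsub := dyadicSq_subset k (i m) (j m) (hi m) (hj m)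
      have hcomp : IsCompact (dyadicSq k (i m) (j m)) := isCompact_Icc.prod isCompact_Icc
      exact (hcomp.image_of_continuousOn (hc.mono hsub)).isBounded
    · exact Set.mem_image_of_mem _ ⟨pa m, ra m⟩
    · exact Set.mem_image_of_mem _ ⟨pb m, rb m⟩
  obtain ⟨m, hm⟩ : ∃ m : Fin 4, ‖φ x - φ y‖ ≤ 4 * Metric.diam (φ '' dyadicSq k (i m) (j m)) := by
    by_contra! hcon
    have e0 : x = (p 0, r 0) := by rw [p0, r0]
    have e4 : y = (p 4, r 4) := by rw [p4, r4]
    have t : dist (φ x) (φ y) ≤ dist (φ (p 0, r 0)) (φ (p 1, r 1)) +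
        dist (φ (p 1, r 1)) (φ (p 2, r 2)) + dist (φ (p 2, r 2)) (φ (p 3, r 3)) +
        dist (φ (p 3, r 3)) (φ (p 4, r 4)) := by
      rw [e0, e4]
      refine (dist_triangle _ (φ (p 3, r 3)) _).trans (add_le_add_left ?_ _)
      exact dist_triangle4 _ _ _ _
    rw [dist_eq_norm] at t
    have d0 := hd 0
    have d1 := hd 1
    have d2 := hd 2
    have d3 := hd 3
    have c0 := hcon 0
    have c1 := hcon 1
    have c2 := hcon 2
    have c3 := hcon 3
    simp only [Fin.castSucc_zero, Fin.castSucc_one, Fin.succ_zero_eq_one, Fin.succ_one_eq_two] at d0 d1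
    change dist (φ (p 2, r 2)) (φ (p 3, r 3)) ≤ _ at d2
    change dist (φ (p 3, r 3)) (φ (p 4, r 4)) ≤ _ at d3
    linarith
  refine ⟨i m, j m, hi m, hj m, hm, ?_, ?_⟩
  · rw [Metric.mem_closedBall, Prod.dist_eq]
    exact max_le (hxi m) (hxj m)
  · rw [Metric.mem_closedBall, Prod.dist_eq]
    exact max_le (hyi m) (hyj m)

lemma aux_vol (c : ℝ × ℝ) (r : ℝ) (hr : 0 ≤ r) :
    volume (Metric.closedBall c r) = ENNReal.ofReal ((2 * r) ^ 2) := by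
  obtain ⟨a, b⟩ := c
  rw [← closedBall_prod_same, Measure.volume_eq_prod, Measure.prod_prod, Real.volume_closedBall,
    Real.volume_closedBall, ← ENNReal.ofReal_mul (by positivity), sq]

/-- The pointwise bound. -/
lemma aux_pointwise (q : ℝ) (hq : 1 < q) (φ : ℝ × ℝ → ℝ × ℝ)
    (hc : ContinuousOn φ (Set.Icc (0 : ℝ) 1 ×ˢ Set.Icc (0 : ℝ) 1))
    (x y : ℝ × ℝ) (hx : x ∈ Set.Icc (0 : ℝ) 1 ×ˢ Set.Icc (0 : ℝ) 1)
    (hy : y ∈ Set.Icc (0 : ℝ) 1 ×ˢ Set.Icc (0 : ℝ) 1) :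
    ENNReal.ofReal (‖φ x - φ y‖ ^ q / ‖x - y‖ ^ (q + 1)) ≤
      ∑' k : ℕ, ∑' i : Fin (2 ^ (k + 1)), ∑' j : Fin (2 ^ (k + 1)),
        ENNReal.ofReal ((4 * Metric.diam (φ '' dyadicSq (k + 1) i j)) ^ q *
          ((2 : ℝ) ^ (k + 1)) ^ (q + 1)) *
        ((Metric.closedBall ((((i : ℕ) : ℝ) / 2 ^ (k + 1), ((j : ℕ) : ℝ) / 2 ^ (k + 1)) : ℝ × ℝ)
          (4 / 2 ^ (k + 1))).indicator 1 x *
        (Metric.closedBall ((((i : ℕ) : ℝ) / 2 ^ (k + 1), ((j : ℕ) : ℝ) / 2 ^ (k + 1)) : ℝ × ℝ)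
          (4 / 2 ^ (k + 1))).indicator 1 y) := by
  rcases eq_or_ne x y with h | h
  · subst h
    simp [Real.zero_rpow (by linarith : q ≠ 0)]
  have hpos : 0 < ‖x - y‖ := norm_pos_iff.mpr (sub_ne_zero.mpr h)
  have hle : ‖x - y‖ ≤ 1 := by
    rw [Prod.norm_def]
    refine max_le ?_ ?_
    · exact abs_le.mpr ⟨by simp; linarith [hx.1.1, hy.1.2], by simp; linarith [hx.1.2, hy.1.1]⟩
    · exact abs_le.mpr ⟨by simp; linarith [hx.2.1, hy.2.2], by simp; linarith [hx.2.2, hy.2.1]⟩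
  obtain ⟨k, hk1, hk2⟩ := exists_nat_pow_near_of_lt_one hpos hle
    (by norm_num : (0 : ℝ) < 1 / 2) (by norm_num)
  have hk2' : ‖x - y‖ ≤ 2 / 2 ^ (k + 1) := by
    refine hk2.trans (le_of_eq ?_)
    rw [pow_succ, one_div, inv_pow]; field_simp
  obtain ⟨i, j, hi, hj, hφ, hxb, hyb⟩ := aux_square φ hc x y hx hy (k + 1) hk2'
  refine le_trans ?_ (ENNReal.le_tsum k)
  refine le_trans ?_ (ENNReal.le_tsum (⟨i, hi⟩ : Fin (2 ^ (k + 1))))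
  refine le_trans ?_ (ENNReal.le_tsum (⟨j, hj⟩ : Fin (2 ^ (k + 1))))
  simp only [Set.indicator_of_mem hxb, Set.indicator_of_mem hyb, Pi.one_apply, mul_one]
  apply ENNReal.ofReal_le_ofReal
  rw [div_eq_mul_inv, ← Real.inv_rpow hpos.le]
  have hinv : ‖x - y‖⁻¹ ≤ (2 : ℝ) ^ (k + 1) := by
    rw [inv_le_comm₀ hpos (by positivity)]
    simpa using hk1.le
  have hq0 : 0 ≤ q := by linarith
  have hq1 : 0 ≤ q + 1 := by linarith
  have := Real.rpow_le_rpow (norm_nonneg _) hφ hq0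
  have := Real.rpow_le_rpow (inv_nonneg.mpr hpos.le) hinv hq1
  gcongr

theorem stmt_3 (q : ℝ) (hq : 1 < q) (φ : ℝ × ℝ → ℝ × ℝ)
    (hc : ContinuousOn φ (Set.Icc (0 : ℝ) 1 ×ˢ Set.Icc (0 : ℝ) 1))
    (hi : Set.InjOn φ (Set.Icc (0 : ℝ) 1 ×ˢ Set.Icc (0 : ℝ) 1))
    (hsum :
      (∑' k : ℕ, ∑' i : Fin (2 ^ (k + 1)), ∑' j : Fin (2 ^ (k + 1)),
        ENNReal.ofReal ((2 : ℝ) ^ (((k : ℝ) + 1) * (q - 3)) *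
          Metric.diam (φ '' dyadicSq (k + 1) i j) ^ q)) ≠ ⊤) :
    (∫⁻ x in Set.Icc (0 : ℝ) 1 ×ˢ Set.Icc (0 : ℝ) 1,
      ∫⁻ y in Set.Icc (0 : ℝ) 1 ×ˢ Set.Icc (0 : ℝ) 1,
        ENNReal.ofReal (‖φ x - φ y‖ ^ q / ‖x - y‖ ^ (q + 1))) < ⊤ := by
  have hQ : MeasurableSet (Set.Icc (0 : ℝ) 1 ×ˢ Set.Icc (0 : ℝ) 1) :=
    measurableSet_Icc.prod measurableSet_Icc
  let B : (k : ℕ) → Fin (2 ^ (k + 1)) → Fin (2 ^ (k + 1)) → Set (ℝ × ℝ) := fun k i j =>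
    Metric.closedBall ((((i : ℕ) : ℝ) / 2 ^ (k + 1), ((j : ℕ) : ℝ) / 2 ^ (k + 1)) : ℝ × ℝ)
          (4 / 2 ^ (k + 1))
  let A : (k : ℕ) → Fin (2 ^ (k + 1)) → Fin (2 ^ (k + 1)) → ENNReal := fun k i j =>
    ENNReal.ofReal ((4 * Metric.diam (φ '' dyadicSq (k + 1) i j)) ^ q *
          ((2 : ℝ) ^ (k + 1)) ^ (q + 1))
  have hB : ∀ k i j, MeasurableSet (B k i j) := fun k i j => Metric.isClosed_closedBall.measurableSet
  have hBi : ∀ k i j, Measurable ((B k i j).indicator (1 : ℝ × ℝ → ENNReal)) :=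
    fun k i j => measurable_one.indicator (hB k i j)
  have step1 : (∫⁻ x in Set.Icc (0 : ℝ) 1 ×ˢ Set.Icc (0 : ℝ) 1,
      ∫⁻ y in Set.Icc (0 : ℝ) 1 ×ˢ Set.Icc (0 : ℝ) 1,
        ENNReal.ofReal (‖φ x - φ y‖ ^ q / ‖x - y‖ ^ (q + 1))) ≤
      ∫⁻ x, ∫⁻ y, ∑' k, ∑' i, ∑' j, A k i j *
        ((B k i j).indicator 1 x * (B k i j).indicator 1 y) := by
    refine le_trans (setLIntegral_mono' hQ (fun x hx => ?_)) (setLIntegral_le_lintegral _ _)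
    refine le_trans (setLIntegral_mono' hQ (fun y hy => ?_)) (setLIntegral_le_lintegral _ _)
    exact aux_pointwise q hq φ hc x y hx hy
  have step2 : (∫⁻ x, ∫⁻ y, ∑' k, ∑' i, ∑' j, A k i j *
        ((B k i j).indicator 1 x * (B k i j).indicator 1 y)) =
      ∑' k, ∑' i, ∑' j, A k i j * (volume (B k i j) * volume (B k i j)) := by
    have inner : ∀ x, (∫⁻ y, ∑' k, ∑' i, ∑' j, A k i j *
        ((B k i j).indicator 1 x * (B k i j).indicator 1 y)) =
        ∑' k, ∑' i, ∑' j, A k i j * ((B k i j).indicator 1 x * volume (B k i j)) := by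
      intro x
      have m0 : ∀ k i j, Measurable (fun y => A k i j *
        ((B k i j).indicator 1 x * (B k i j).indicator 1 y)) :=
        fun k i j => ((hBi k i j).const_mul _).const_mul _
      rw [lintegral_tsum (fun k => (Measurable.ennreal_tsum fun i =>
        Measurable.ennreal_tsum fun j => m0 k i j).aemeasurable)]
      refine tsum_congr fun k => ?_
      rw [lintegral_tsum (fun i => (Measurable.ennreal_tsum fun j => m0 k i j).aemeasurable)]
      refine tsum_congr fun i => ?_
      rw [lintegral_tsum (fun j => (m0 k i j).aemeasurable)]
      refine tsum_congr fun j => ?_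
      rw [lintegral_const_mul _ ((hBi k i j).const_mul _), lintegral_const_mul _ (hBi k i j),
        lintegral_indicator_one (hB k i j)]
    simp_rw [inner]
    have m0 : ∀ k i j, Measurable (fun x => A k i j *
        ((B k i j).indicator 1 x * volume (B k i j))) :=
        fun k i j => ((hBi k i j).mul_const _).const_mul _
    rw [lintegral_tsum (fun k => (Measurable.ennreal_tsum fun i =>
      Measurable.ennreal_tsum fun j => m0 k i j).aemeasurable)]
    refine tsum_congr fun k => ?_
    rw [lintegral_tsum (fun i => (Measurable.ennreal_tsum fun j => m0 k i j).aemeasurable)]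
    refine tsum_congr fun i => ?_
    rw [lintegral_tsum (fun j => (m0 k i j).aemeasurable)]
    refine tsum_congr fun j => ?_
    rw [lintegral_const_mul _ ((hBi k i j).mul_const _), lintegral_mul_const _ (hBi k i j),
      lintegral_indicator_one (hB k i j)]
  have step3 : ∀ k i j, A k i j * (volume (B k i j) * volume (B k i j)) =
      ENNReal.ofReal (4 ^ q * 4096) * ENNReal.ofReal ((2 : ℝ) ^ (((k : ℝ) + 1) * (q - 3)) *
          Metric.diam (φ '' dyadicSq (k + 1) i j) ^ q) := by
    intro k i j
    have hd : 0 ≤ Metric.diam (φ '' dyadicSq (k + 1) i j) := Metric.diam_nonneg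
    simp only [A, B]
    rw [aux_vol _ _ (by positivity), ← ENNReal.ofReal_mul (by positivity),
      ← ENNReal.ofReal_mul (by positivity), ← ENNReal.ofReal_mul (by positivity)]
    congr 1
    rw [Real.mul_rpow (by norm_num) hd]
    have e : ((2 : ℝ) ^ (k + 1)) ^ (q + 1) =
        (2 : ℝ) ^ (((k : ℝ) + 1) * (q - 3)) * ((2 : ℝ) ^ (k + 1)) ^ 4 := by
      rw [Real.rpow_mul (by norm_num)]
      have : (2 : ℝ) ^ ((k : ℝ) + 1) = 2 ^ (k + 1) := by
        exact_mod_cast Real.rpow_natCast (2 : ℝ) (k + 1)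
      rw [this, ← Real.rpow_natCast _ 4, ← Real.rpow_add (by positivity)]
      congr 1
      push_cast
      ring
    rw [e]
    have hne : (2 : ℝ) ^ (k + 1) ≠ 0 := by positivity
    generalize (2 : ℝ) ^ (k + 1) = N at *
    field_simp
    ring
  refine lt_of_le_of_lt (step1.trans_eq step2) ?_
  simp_rw [step3, ENNReal.tsum_mul_left]
  exact ENNReal.mul_lt_top ENNReal.ofReal_lt_top hsum.lt_top
end
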